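/- arXiv:1811.10163 — 4 statements merged into one kernel-verified Lean document; each statement's English description precedes it below -/
import Mathlib

section
/- Let Ω ⊆ ℝⁿ be a nonempty open set and let G : Ω × Ω → (0,∞] satisfy G(x,y) ≤ c₀|x−y|^{2α−n} for all x,y ∈ Ω, for some constants c₀ > 0 and 0 < 2α < n. Let β > 0 and set s = n(β+1)/(n+2αβ). If σ is a positive function on Ω with σ ∈ L^s(Ω) (Lebesgue measure), then ∫_Ω (G(σ dx))^β σ dx < ∞, where G(σ dx)(x) = ∫_Ω G(x,y) σ(y) dy. -/
/-!
The argument is Hedberg's. Extend `σ` by zero to a function `f` on `ℝⁿ`, and put `m = 2α`, so that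
the potential is at most a constant times the Riesz potential `∫ |x - y| ^ (m - n) f(y) dy`.
Writing `|x - y| ^ (m - n)` as a superposition of indicators of `{|x - y| < r}` turns this into
`∫ r ^ (m - n - 1) A(r) dr` over `r > 0`, where `A(r)` is the integral of `f` over `ball x r`
(`riesz_le_radial`). There are two bounds for `A(r)`: a multiple of `r ^ n * M f(x)`, with `M` the
Hardy-Littlewood maximal function (`ballInt_le_maxFun`), and a multiple of `r ^ (n - n / s)`, by
Hölder (`ballInt_le_holder`). Using the first for small radii and the second for large ones, and
optimising the cut (`hedberg_radial`), bounds the potential by a multiple of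
`M f(x) ^ (1 - m s / n)`.

The value of `s` is exactly the one for which `(1 - m s / n) β = s - 1`. Hence the integral in
question is at most a multiple of `∫ (M f) ^ (s - 1) f`, which is finite by Hölder and the maximal
inequality in `L^s` (`maxFun_strong`). The latter follows from Vitali's covering lemma
(`weak_type`), applied to the truncations of `f`, and the layer-cake formula.
-/

open MeasureTheory Metric Set ENNReal

/-- The potential `Gσ(x) = ∫_Ω G(x,y) dσ(y)` of a kernel `G` on `Ω`. -/
noncomputable def kernelPot {n : ℕ} (Ω : Set (EuclideanSpace ℝ (Fin n)))
    (G : EuclideanSpace ℝ (Fin n) → EuclideanSpace ℝ (Fin n) → ℝ≥0∞)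
    (μ : Measure (EuclideanSpace ℝ (Fin n))) (x : EuclideanSpace ℝ (Fin n)) : ℝ≥0∞ :=
  ∫⁻ y in Ω, G x y ∂μ

/-- `μ ∈ M⁺(Ω)`: a nonnegative Borel measure living on `Ω`, locally finite on `Ω`. -/
def MemMplus {n : ℕ} (Ω : Set (EuclideanSpace ℝ (Fin n)))
    (μ : Measure (EuclideanSpace ℝ (Fin n))) : Prop :=
  μ Ωᶜ = 0 ∧ ∀ K ⊆ Ω, IsCompact K → μ K < ⊤

/-- A kernel on `Ω`: a positive lower semicontinuous function `Ω × Ω → (0,∞]`. -/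
def IsKernel {n : ℕ} (Ω : Set (EuclideanSpace ℝ (Fin n)))
    (G : EuclideanSpace ℝ (Fin n) → EuclideanSpace ℝ (Fin n) → ℝ≥0∞) : Prop :=
  LowerSemicontinuousOn
      (fun z : EuclideanSpace ℝ (Fin n) × EuclideanSpace ℝ (Fin n) => G z.1 z.2)
      (Ω ×ˢ Ω) ∧
    ∀ x ∈ Ω, ∀ y ∈ Ω, 0 < G x y

/-- The (topological) support of a measure. -/
def msupport {n : ℕ} (μ : Measure (EuclideanSpace ℝ (Fin n))) :
    Set (EuclideanSpace ℝ (Fin n)) :=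
  {x | ∀ U : Set (EuclideanSpace ℝ (Fin n)), IsOpen U → x ∈ U → 0 < μ U}

/-- The weak maximum principle with constant `h` for the kernel `G` on `Ω`. -/
def SatisfiesWMP {n : ℕ} (Ω : Set (EuclideanSpace ℝ (Fin n)))
    (G : EuclideanSpace ℝ (Fin n) → EuclideanSpace ℝ (Fin n) → ℝ≥0∞) (h : ℝ) : Prop :=
  ∀ μ : Measure (EuclideanSpace ℝ (Fin n)), MemMplus Ω μ →
    (∀ x ∈ Ω ∩ msupport μ, kernelPot Ω G μ x ≤ 1) →
    ∀ x ∈ Ω, kernelPot Ω G μ x ≤ ENNReal.ofReal h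

/-- Quasi-symmetry with constant `a ≥ 1`: `a⁻¹ G(y,x) ≤ G(x,y) ≤ a G(y,x)` on `Ω × Ω`. -/
def QuasiSymmetric {n : ℕ} (Ω : Set (EuclideanSpace ℝ (Fin n)))
    (G : EuclideanSpace ℝ (Fin n) → EuclideanSpace ℝ (Fin n) → ℝ≥0∞) (a : ℝ) : Prop :=
  ∀ x ∈ Ω, ∀ y ∈ Ω,
    G y x ≤ ENNReal.ofReal a * G x y ∧ G x y ≤ ENNReal.ofReal a * G y x

/-! ### Power integrals on the half-line -/

lemma lintegral_Ioo_rpow {p : ℝ} (hp : 0 < p) {a : ℝ} (ha : 0 ≤ a) :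
    ∫⁻ t in Ioo 0 a, ENNReal.ofReal t ^ (p - 1) = ENNReal.ofReal (a ^ p / p) := by
  have hint : IntegrableOn (fun t : ℝ => t ^ (p - 1)) (Ioo 0 a) := by
    have := (intervalIntegral.intervalIntegrable_rpow' (a := 0) (b := a) (r := p - 1)
      (by linarith))
    rw [intervalIntegrable_iff_integrableOn_Ioo_of_le ha] at this
    exact this
  have h0 : ∫ t in Ioo 0 a, t ^ (p - 1) = a ^ p / p := by
    rw [← integral_Ioc_eq_integral_Ioo, ← intervalIntegral.integral_of_le ha,
      integral_rpow (Or.inl (by linarith))]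
    simp [Real.zero_rpow hp.ne']
  rw [← h0, ofReal_integral_eq_lintegral_ofReal hint]
  · refine setLIntegral_congr_fun measurableSet_Ioo fun t ht => ?_
    exact ENNReal.ofReal_rpow_of_pos ht.1
  · filter_upwards [ae_restrict_mem measurableSet_Ioo] with t ht
    exact Real.rpow_nonneg ht.1.le _

lemma lintegral_Ioi_rpow_neg {q : ℝ} (hq : 0 < q) {a : ℝ} (ha : 0 < a) :
    ∫⁻ t in Ioi a, ENNReal.ofReal t ^ (-q - 1) = ENNReal.ofReal (a ^ (-q) / q) := by
  have hint : IntegrableOn (fun t : ℝ => t ^ (-q - 1)) (Ioi a) :=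
    integrableOn_Ioi_rpow_of_lt (by linarith) ha
  have h0 : ∫ t in Ioi a, t ^ (-q - 1) = a ^ (-q) / q := by
    rw [integral_Ioi_rpow_of_lt (by linarith) ha]
    simp [neg_div_neg_eq]
  rw [← h0, ofReal_integral_eq_lintegral_ofReal hint]
  · refine setLIntegral_congr_fun measurableSet_Ioi fun t ht => ?_
    exact ENNReal.ofReal_rpow_of_pos (ha.trans ht)
  · filter_upwards [ae_restrict_mem measurableSet_Ioi] with t ht
    exact Real.rpow_nonneg (ha.trans ht).le _

/-- Layer cake for a single extended number, the value `⊤` included. -/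
lemma rpow_le_lintegral {p : ℝ} (hp : 0 < p) (a : ℝ≥0∞) :
    a ^ p ≤ ENNReal.ofReal p *
      ∫⁻ t in Ioi (0 : ℝ), (if ENNReal.ofReal t < a then ENNReal.ofReal t ^ (p - 1) else 0) := by
  have key : ∀ b : ℝ, 0 ≤ b → ENNReal.ofReal b ≤ a → ENNReal.ofReal b ^ p ≤ ENNReal.ofReal p *
      ∫⁻ t in Ioi (0 : ℝ), (if ENNReal.ofReal t < a then ENNReal.ofReal t ^ (p - 1) else 0) := by
    intro b hb hba
    calc ENNReal.ofReal b ^ p = ENNReal.ofReal p * ENNReal.ofReal (b ^ p / p) := by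
          rw [← ENNReal.ofReal_mul hp.le, ENNReal.ofReal_rpow_of_nonneg hb hp.le]
          congr 1; field_simp
      _ = ENNReal.ofReal p * ∫⁻ t in Ioo 0 b, ENNReal.ofReal t ^ (p - 1) := by
          rw [lintegral_Ioo_rpow hp hb]
      _ = ENNReal.ofReal p * ∫⁻ t in Ioo 0 b,
            (if ENNReal.ofReal t < a then ENNReal.ofReal t ^ (p - 1) else 0) := by
          congr 1
          refine setLIntegral_congr_fun measurableSet_Ioo fun t ht => ?_
          have : ENNReal.ofReal t < a :=
            ((ENNReal.ofReal_lt_ofReal_iff (ht.1.trans ht.2)).2 ht.2).trans_le hba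
          simp [this]
      _ ≤ _ := by
          gcongr
          exact Ioo_subset_Ioi_self
  rcases eq_or_ne a ⊤ with rfl | ha
  · have hl : Filter.Tendsto (fun k : ℕ => ENNReal.ofReal (k : ℝ) ^ p) Filter.atTop
        (nhds ((⊤ : ℝ≥0∞) ^ p)) := by
      simp only [ENNReal.ofReal_natCast]
      exact (ENNReal.continuous_rpow_const.tendsto _).comp ENNReal.tendsto_nat_nhds_top
    exact le_of_tendsto' hl fun k => key k (by positivity) le_top
  · have := key a.toReal ENNReal.toReal_nonneg (by rw [ENNReal.ofReal_toReal ha])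
    rwa [ENNReal.ofReal_toReal ha] at this

lemma lintegral_layer_le {p c : ℝ} (hp : 0 < p) (hc : 0 < c) (a : ℝ≥0∞) :
    ∫⁻ t in Ioi (0 : ℝ), (if ENNReal.ofReal (c * t) < a then ENNReal.ofReal t ^ (p - 1) else 0)
      ≤ ENNReal.ofReal ((1 / c) ^ p / p) * a ^ p := by
  rcases eq_or_ne a ⊤ with rfl | ha
  · rw [ENNReal.top_rpow_of_pos hp, ENNReal.mul_top]
    · exact le_top
    · rw [Ne, ENNReal.ofReal_eq_zero, not_le]; positivity
  lift a to NNReal using ha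
  calc _ ≤ ∫⁻ t in Ioi (0 : ℝ), (Ioo 0 ((a : ℝ) / c)).indicator
            (fun t => ENNReal.ofReal t ^ (p - 1)) t := by
        refine setLIntegral_mono' measurableSet_Ioi fun t ht => ?_
        split_ifs with h
        · rw [indicator_of_mem]
          refine ⟨ht, ?_⟩
          rw [← ENNReal.ofReal_coe_nnreal, ENNReal.ofReal_lt_ofReal_iff_of_nonneg
            (mul_pos hc ht).le] at h
          rw [lt_div_iff₀ hc]; linarith
        · exact zero_le
    _ ≤ ∫⁻ t, (Ioo 0 ((a : ℝ) / c)).indicator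
            (fun t => ENNReal.ofReal t ^ (p - 1)) t := setLIntegral_le_lintegral _ _
    _ = _ := by
        rw [lintegral_indicator measurableSet_Ioo, lintegral_Ioo_rpow hp (by positivity),
          ← ENNReal.ofReal_coe_nnreal, ENNReal.ofReal_rpow_of_nonneg a.coe_nonneg hp.le,
          ← ENNReal.ofReal_mul (by positivity)]
        congr 1
        rw [Real.div_rpow a.coe_nonneg hc.le, Real.div_rpow zero_le_one hc.le, Real.one_rpow]
        field_simp

/-- `d ^ (-q)` as a superposition of indicators of `{d < r}`. -/
lemma rpow_neg_le_lintegral {q : ℝ} (hq : 0 < q) {d : ℝ} (hd : 0 ≤ d) :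
    ENNReal.ofReal d ^ (-q) ≤ ENNReal.ofReal q *
      ∫⁻ r in Ioi (0 : ℝ), (if d < r then ENNReal.ofReal r ^ (-q - 1) else 0) := by
  have key : ∀ b : ℝ, 0 < b → d ≤ b → ENNReal.ofReal b ^ (-q) ≤ ENNReal.ofReal q *
      ∫⁻ r in Ioi (0 : ℝ), (if d < r then ENNReal.ofReal r ^ (-q - 1) else 0) := by
    intro b hb hdb
    calc ENNReal.ofReal b ^ (-q) = ENNReal.ofReal q * ENNReal.ofReal (b ^ (-q) / q) := by
          rw [← ENNReal.ofReal_mul hq.le, ENNReal.ofReal_rpow_of_pos hb]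
          congr 1; field_simp
      _ = ENNReal.ofReal q * ∫⁻ t in Ioi b, ENNReal.ofReal t ^ (-q - 1) := by
          rw [lintegral_Ioi_rpow_neg hq hb]
      _ = ENNReal.ofReal q * ∫⁻ t in Ioi b,
            (if d < t then ENNReal.ofReal t ^ (-q - 1) else 0) := by
          congr 1
          refine setLIntegral_congr_fun measurableSet_Ioi fun t ht => ?_
          simp [hdb.trans_lt ht]
      _ ≤ _ := by
          gcongr
  rcases hd.eq_or_lt with rfl | hd
  · have hl : Filter.Tendsto (fun b : ℝ => ENNReal.ofReal b ^ (-q)) (nhdsWithin 0 (Ioi 0))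
        (nhds (ENNReal.ofReal 0 ^ (-q))) :=
      ((ENNReal.continuous_rpow_const.comp ENNReal.continuous_ofReal).tendsto 0).mono_left
        nhdsWithin_le_nhds
    refine le_of_tendsto hl ?_
    filter_upwards [self_mem_nhdsWithin] with b hb
    exact key b hb (le_of_lt hb)
  · exact key d hd le_rfl

/-- Hedberg's optimisation: bounds on `A` of two different orders in `r` are balanced by splitting
the radial integral at the radius where they coincide. -/
lemma hedberg_radial {N m ν : ℝ} (hm : 0 < m) (hν : m < ν) {a b : ℝ≥0∞} (hb0 : b ≠ 0)
    (hb : b ≠ ⊤) (A : ℝ → ℝ≥0∞)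
    (h1 : ∀ r, 0 < r → A r ≤ a * ENNReal.ofReal r ^ N)
    (h2 : ∀ r, 0 < r → A r ≤ b * ENNReal.ofReal r ^ (N - ν)) :
    ∫⁻ r in Ioi (0 : ℝ), ENNReal.ofReal r ^ (m - N - 1) * A r ≤
      ENNReal.ofReal (1 / m + 1 / (ν - m)) * (a ^ (1 - m / ν) * b ^ (m / ν)) := by
  have hν0 : 0 < ν := hm.trans hν
  have hmν : m / ν < 1 := (div_lt_one hν0).2 hν
  have hνm : 0 < ν - m := by linarith
  have hθ : 0 < 1 - m / ν := by linarith
  rcases eq_or_ne a 0 with rfl | ha0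
  · have : ∫⁻ r in Ioi (0 : ℝ), ENNReal.ofReal r ^ (m - N - 1) * A r =
        ∫⁻ r in Ioi (0 : ℝ), 0 := by
      refine setLIntegral_congr_fun measurableSet_Ioi fun r hr => ?_
      have := h1 r hr
      simp only [zero_mul, nonpos_iff_eq_zero] at this
      simp [this]
    simp [this]
  rcases eq_or_ne a ⊤ with rfl | ha
  · rw [ENNReal.top_rpow_of_pos hθ, ENNReal.top_mul, ENNReal.mul_top]
    · exact le_top
    · rw [Ne, ENNReal.ofReal_eq_zero, not_le]; positivity
    · simp [ENNReal.rpow_eq_zero_iff, hb0, hb]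
  lift a to NNReal using ha
  lift b to NNReal using hb
  have ha' : 0 < (a : ℝ) := by
    have : a ≠ 0 := by simpa using ha0
    exact lt_of_le_of_ne a.2 (fun h => this (NNReal.coe_eq_zero.1 h.symm))
  have hb' : 0 < (b : ℝ) := by
    have : b ≠ 0 := by simpa using hb0
    exact lt_of_le_of_ne b.2 (fun h => this (NNReal.coe_eq_zero.1 h.symm))
  -- the radius at which the two bounds on `A` coincide
  set δ : ℝ := ((b : ℝ) / a) ^ (1 / ν) with hδ
  have hδ0 : 0 < δ := Real.rpow_pos_of_pos (div_pos hb' ha') _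
  have hnear : ∫⁻ r in Ioo 0 δ, ENNReal.ofReal r ^ (m - N - 1) * A r ≤
      a * ENNReal.ofReal (δ ^ m / m) := by
    calc _ ≤ ∫⁻ r in Ioo 0 δ, a * ENNReal.ofReal r ^ (m - 1) := by
          refine setLIntegral_mono' measurableSet_Ioo fun r hr => ?_
          have h0 : ENNReal.ofReal r ≠ 0 := by simpa using hr.1
          calc _ ≤ ENNReal.ofReal r ^ (m - N - 1) * (a * ENNReal.ofReal r ^ N) := by
                gcongr; exact h1 r hr.1
            _ = a * (ENNReal.ofReal r ^ (m - N - 1) * ENNReal.ofReal r ^ N) := by ring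
            _ = _ := by
                rw [← ENNReal.rpow_add _ _ h0 ENNReal.ofReal_ne_top]; congr 2; ring
      _ = _ := by
          rw [lintegral_const_mul' _ _ ENNReal.coe_ne_top, lintegral_Ioo_rpow hm hδ0.le]
  have hfar : ∫⁻ r in Ici δ, ENNReal.ofReal r ^ (m - N - 1) * A r ≤
      b * ENNReal.ofReal (δ ^ (-(ν - m)) / (ν - m)) := by
    calc _ ≤ ∫⁻ r in Ici δ, b * ENNReal.ofReal r ^ (-(ν - m) - 1) := by
          refine setLIntegral_mono' measurableSet_Ici fun r hr => ?_
          have hr0 : 0 < r := hδ0.trans_le hr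
          have h0 : ENNReal.ofReal r ≠ 0 := by simpa using hr0
          calc _ ≤ ENNReal.ofReal r ^ (m - N - 1) * (b * ENNReal.ofReal r ^ (N - ν)) := by
                gcongr; exact h2 r hr0
            _ = b * (ENNReal.ofReal r ^ (m - N - 1) * ENNReal.ofReal r ^ (N - ν)) := by ring
            _ = _ := by
                rw [← ENNReal.rpow_add _ _ h0 ENNReal.ofReal_ne_top]; congr 2; ring
      _ = _ := by
          rw [lintegral_const_mul' _ _ ENNReal.coe_ne_top, setLIntegral_congr Ioi_ae_eq_Ici.symm,
            lintegral_Ioi_rpow_neg hνm hδ0]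
  have hsplit : Ioi (0 : ℝ) = Ioo 0 δ ∪ Ici δ := by
    rw [Ioo_union_Ici_eq_Ioi hδ0]
  have hval : ∀ e : ℝ, δ ^ e = (b : ℝ) ^ (e / ν) * (a : ℝ) ^ (-(e / ν)) := by
    intro e
    rw [hδ, ← Real.rpow_mul (by positivity), Real.div_rpow hb'.le ha'.le, Real.rpow_neg ha'.le,
      div_eq_mul_inv]
    congr 2 <;> ring_nf
  calc _ ≤ (∫⁻ r in Ioo 0 δ, ENNReal.ofReal r ^ (m - N - 1) * A r) +
        ∫⁻ r in Ici δ, ENNReal.ofReal r ^ (m - N - 1) * A r := by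
          rw [hsplit]; exact lintegral_union_le _ _ _
    _ ≤ a * ENNReal.ofReal (δ ^ m / m) + b * ENNReal.ofReal (δ ^ (-(ν - m)) / (ν - m)) :=
          add_le_add hnear hfar
    _ = _ := by
          rw [← ENNReal.ofReal_coe_nnreal, ← ENNReal.ofReal_coe_nnreal (p := b),
            ENNReal.ofReal_rpow_of_pos ha', ENNReal.ofReal_rpow_of_pos hb',
            ← ENNReal.ofReal_mul ha'.le, ← ENNReal.ofReal_mul hb'.le,
            ← ENNReal.ofReal_add (by positivity) (by positivity),
            ← ENNReal.ofReal_mul (by positivity), ← ENNReal.ofReal_mul (by positivity)]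
          congr 1
          have e1 : (a : ℝ) * δ ^ m = a ^ (1 - m / ν) * b ^ (m / ν) := by
            rw [hval, sub_eq_add_neg, Real.rpow_add ha', Real.rpow_one]; ring
          have e2 : (b : ℝ) * δ ^ (-(ν - m)) = a ^ (1 - m / ν) * b ^ (m / ν) := by
            have x1 : -(ν - m) / ν = m / ν + (-1) := by field_simp; ring
            have x2 : -(m / ν + (-1)) = 1 - m / ν := by ring
            rw [hval, x1, x2, Real.rpow_add hb', Real.rpow_neg_one]
            field_simp
          rw [← mul_div_assoc, ← mul_div_assoc, e1, e2]; ring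

/-! ### The maximal function -/

/-- The integral of `f` over the open ball `ball x r`. -/
noncomputable def ballInt {n : ℕ} (f : EuclideanSpace ℝ (Fin n) → ℝ≥0∞) (r : ℝ)
    (x : EuclideanSpace ℝ (Fin n)) : ℝ≥0∞ :=
  ∫⁻ y in ball x r, f y

/-- The centred Hardy-Littlewood maximal function, normalised by `r ^ n` instead of the volume of
the ball, and with only rational radii so that its measurability is immediate. -/
noncomputable def maxFun {n : ℕ} (f : EuclideanSpace ℝ (Fin n) → ℝ≥0∞)
    (x : EuclideanSpace ℝ (Fin n)) : ℝ≥0∞ :=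
  ⨆ q : {q : ℚ // 0 < q}, ballInt f (q : ℚ) x / ENNReal.ofReal ((q : ℚ) : ℝ) ^ (n : ℝ)

section
variable {n : ℕ}
local notation "E" => EuclideanSpace ℝ (Fin n)

lemma volume_ball_eq (hn : 0 < n) (x : E) {r : ℝ} (hr : 0 ≤ r) :
    volume (ball x r) = ENNReal.ofReal r ^ (n : ℝ) * volume (ball (0 : E) 1) := by
  have : Nonempty (Fin n) := ⟨⟨0, hn⟩⟩
  rw [Measure.addHaar_ball volume x hr, finrank_euclideanSpace, Fintype.card_fin,
    ENNReal.ofReal_pow hr, ENNReal.rpow_natCast]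

lemma volume_closedBall_eq (x : E) {r : ℝ} (hr : 0 ≤ r) :
    volume (closedBall x r) = ENNReal.ofReal r ^ (n : ℝ) * volume (ball (0 : E) 1) := by
  rw [Measure.addHaar_closedBall volume x hr, finrank_euclideanSpace, Fintype.card_fin,
    ENNReal.ofReal_pow hr, ENNReal.rpow_natCast]

lemma ballInt_eq (f : E → ℝ≥0∞) (r : ℝ) (x : E) :
    ballInt f r x = ∫⁻ y, if dist x y < r then f y else 0 := by
  rw [ballInt, ← lintegral_indicator measurableSet_ball]
  congr 1; ext y
  simp [indicator, dist_comm]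

lemma measurable_ballInt {f : E → ℝ≥0∞} (hf : Measurable f) (r : ℝ) :
    Measurable (ballInt f r) := by
  have : ballInt f r = fun x => ∫⁻ y, if dist x y < r then f y else 0 :=
    funext (ballInt_eq f r)
  rw [this]
  apply Measurable.lintegral_prod_right'
    (f := fun z : E × E => if dist z.1 z.2 < r then f z.2 else 0)
  exact Measurable.ite (measurableSet_lt (by fun_prop) measurable_const) (by fun_prop)
    measurable_const

lemma measurable_maxFun {f : E → ℝ≥0∞} (hf : Measurable f) : Measurable (maxFun f) := by
  unfold maxFun
  exact Measurable.iSup fun q => (measurable_ballInt hf _).div_const _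

/-- Passing from an arbitrary radius to a rational one costs a factor `2 ^ n`. -/
lemma ballInt_le_maxFun (f : E → ℝ≥0∞) (x : E) {r : ℝ} (hr : 0 < r) :
    ballInt f r x ≤ (ENNReal.ofReal 2 ^ (n : ℝ) * maxFun f x) * ENNReal.ofReal r ^ (n : ℝ) := by
  obtain ⟨q, hq1, hq2⟩ := exists_rat_btwn (show r < 2 * r by linarith)
  have hq0 : 0 < q := by exact_mod_cast hr.trans hq1
  have hq0' : (0 : ℝ) < q := hr.trans hq1
  have h1 : ballInt f q x / ENNReal.ofReal (q : ℝ) ^ (n : ℝ) ≤ maxFun f x :=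
    le_iSup (fun q : {q : ℚ // 0 < q} =>
      ballInt f (q : ℚ) x / ENNReal.ofReal ((q : ℚ) : ℝ) ^ (n : ℝ)) ⟨q, hq0⟩
  rw [ENNReal.div_le_iff (ENNReal.rpow_pos (by simpa using hq0') ENNReal.ofReal_ne_top).ne'
    (ENNReal.rpow_ne_top_of_nonneg (by positivity) ENNReal.ofReal_ne_top)] at h1
  calc ballInt f r x ≤ ballInt f q x := lintegral_mono_set (ball_subset_ball hq1.le)
    _ ≤ maxFun f x * ENNReal.ofReal q ^ (n : ℝ) := h1
    _ ≤ maxFun f x * (ENNReal.ofReal (2 * r)) ^ (n : ℝ) := by gcongr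
    _ = _ := by
        rw [ENNReal.ofReal_mul (by norm_num), ENNReal.mul_rpow_of_nonneg _ _ (by positivity)]
        ring

/-- The weak type `(1,1)` estimate, from Vitali's covering lemma. -/
lemma weak_type (hn : 0 < n) (f : E → ℝ≥0∞) {t : ℝ} (ht : 0 < t) :
    ENNReal.ofReal t *
      volume {x : E | ∃ r : ℝ, 0 < r ∧ ENNReal.ofReal t * ENNReal.ofReal r ^ (n : ℝ)
        < ballInt f r x} ≤
      ENNReal.ofReal 5 ^ (n : ℝ) * volume (ball (0 : E) 1) * ∫⁻ y, f y := by
  have hV : volume (ball (0 : E) 1) ≠ 0 := (measure_ball_pos _ _ one_pos).ne'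
  have h5 : ENNReal.ofReal 5 ^ (n : ℝ) ≠ 0 := by simp
  rcases eq_or_ne (∫⁻ y, f y) ⊤ with hI | hI
  · rw [hI, ENNReal.mul_top (mul_ne_zero h5 hV)]; exact le_top
  set S := {x : E | ∃ r : ℝ, 0 < r ∧ ENNReal.ofReal t * ENNReal.ofReal r ^ (n : ℝ)
        < ballInt f r x} with hS
  choose! ρ hρ0 hρ using (fun x (hx : x ∈ S) => hx : ∀ x ∈ S, ∃ r : ℝ, 0 < r ∧
    ENNReal.ofReal t * ENNReal.ofReal r ^ (n : ℝ) < ballInt f r x)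
  -- integrability of `f` bounds the radii
  have hR : ∀ x ∈ S, ρ x ≤ ((∫⁻ y, f y).toReal / t) ^ (1 / (n : ℝ)) := by
    intro x hx
    have h1 : ENNReal.ofReal t * ENNReal.ofReal (ρ x) ^ (n : ℝ) ≤ ∫⁻ y, f y :=
      (hρ x hx).le.trans (setLIntegral_le_lintegral _ _)
    rw [ENNReal.ofReal_rpow_of_pos (hρ0 x hx), ← ENNReal.ofReal_mul ht.le,
      ENNReal.ofReal_le_iff_le_toReal hI] at h1
    have hn' : (0 : ℝ) < n := by exact_mod_cast hn
    have h2 : ρ x ^ (n : ℝ) ≤ (∫⁻ y, f y).toReal / t := by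
      rw [le_div_iff₀ ht]; linarith
    calc ρ x = (ρ x ^ (n : ℝ)) ^ (1 / (n : ℝ)) := by
          rw [← Real.rpow_mul (hρ0 x hx).le, mul_one_div_cancel hn'.ne', Real.rpow_one]
      _ ≤ _ := Real.rpow_le_rpow (Real.rpow_nonneg (hρ0 x hx).le _) h2 (by positivity)
  obtain ⟨u, huS, hdis, hcov⟩ :=
    Vitali.exists_disjoint_subfamily_covering_enlargement_closedBall S id ρ _ hR 5 (by norm_num)
  have hdis' : u.PairwiseDisjoint fun a : E => ball a (ρ a) :=
    hdis.mono fun a => ball_subset_closedBall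
  have hc : u.Countable := by
    refine hdis'.countable_of_nonempty_interior fun a ha => ?_
    rw [isOpen_ball.interior_eq]
    exact nonempty_ball.2 (hρ0 a (huS ha))
  calc ENNReal.ofReal t * volume S
      ≤ ENNReal.ofReal t * volume (⋃ b ∈ u, closedBall b (5 * ρ b)) := by
        gcongr
        intro x hx
        obtain ⟨b, hb, hsub⟩ := hcov x hx
        exact mem_biUnion hb (hsub (mem_closedBall_self (hρ0 x hx).le))
    _ ≤ ENNReal.ofReal t * ∑' b : u, volume (closedBall (b : E) (5 * ρ b)) := by
        gcongr
        exact measure_biUnion_le _ hc _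
    _ = ∑' b : u, ENNReal.ofReal t * volume (closedBall (b : E) (5 * ρ b)) := by
        rw [ENNReal.tsum_mul_left]
    _ ≤ ∑' b : u, ENNReal.ofReal 5 ^ (n : ℝ) * volume (ball (0 : E) 1) * ballInt f (ρ b) b := by
        refine ENNReal.tsum_le_tsum fun b => ?_
        have hb0 := hρ0 b (huS b.2)
        rw [volume_closedBall_eq _ (by positivity), ENNReal.ofReal_mul (by norm_num),
          ENNReal.mul_rpow_of_nonneg _ _ (by positivity)]
        calc _ = ENNReal.ofReal 5 ^ (n : ℝ) * volume (ball (0 : E) 1) *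
              (ENNReal.ofReal t * ENNReal.ofReal (ρ b) ^ (n : ℝ)) := by ring
          _ ≤ _ := by gcongr; exact (hρ b (huS b.2)).le
    _ = ENNReal.ofReal 5 ^ (n : ℝ) * volume (ball (0 : E) 1) *
          ∫⁻ y in ⋃ b ∈ u, ball b (ρ b), f y := by
        rw [ENNReal.tsum_mul_left, lintegral_biUnion hc (fun _ _ => measurableSet_ball) hdis']
        rfl
    _ ≤ _ := mul_le_mul_right (setLIntegral_le_lintegral _ _) _

lemma ballInt_le_trunc (hn : 0 < n) (f : E → ℝ≥0∞) (x : E) {r : ℝ} (hr : 0 ≤ r) (l : ℝ≥0∞) :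
    ballInt f r x ≤ ballInt (fun y => if l < f y then f y else 0) r x
      + l * (ENNReal.ofReal r ^ (n : ℝ) * volume (ball (0 : E) 1)) := by
  calc ballInt f r x ≤ ∫⁻ y in ball x r, ((if l < f y then f y else 0) + l) := by
        refine lintegral_mono fun y => ?_
        split_ifs with h
        · exact le_self_add
        · simpa using h
    _ = _ := by
        rw [lintegral_add_right _ measurable_const, setLIntegral_const, volume_ball_eq hn x hr]
        rfl

/-- The weak type estimate applied to the part of `f` above a multiple of the level. -/
lemma volume_maxFun_gt_le (hn : 0 < n) (f : E → ℝ≥0∞) {t c : ℝ} (ht : 0 < t)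
    (hc : 0 ≤ c) (hcV : ENNReal.ofReal c * volume (ball (0 : E) 1) ≤ ENNReal.ofReal (1 / 2)) :
    ENNReal.ofReal (t / 2) * volume {x : E | ENNReal.ofReal t < maxFun f x} ≤
      ENNReal.ofReal 5 ^ (n : ℝ) * volume (ball (0 : E) 1) *
        ∫⁻ y, (if ENNReal.ofReal (c * t) < f y then f y else 0) := by
  refine le_trans (mul_le_mul_right (measure_mono ?_) _) (weak_type hn _ (half_pos ht))
  intro x hx
  obtain ⟨⟨q, hq⟩, hqx⟩ := lt_iSup_iff.1 (show ENNReal.ofReal t < maxFun f x from hx)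
  have hq0' : (0 : ℝ) < q := by exact_mod_cast hq
  refine ⟨q, hq0', ?_⟩
  simp only at hqx
  rw [ENNReal.lt_div_iff_mul_lt
    (Or.inl (ENNReal.rpow_pos (by simpa using hq0') ENNReal.ofReal_ne_top).ne')
    (Or.inl (ENNReal.rpow_ne_top_of_nonneg (by positivity) ENNReal.ofReal_ne_top))] at hqx
  have h1 := hqx.trans_le (ballInt_le_trunc hn f x hq0'.le (ENNReal.ofReal (c * t)))
  have h2 : ENNReal.ofReal (c * t) * (ENNReal.ofReal q ^ (n : ℝ) * volume (ball (0 : E) 1)) ≤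
      ENNReal.ofReal (t / 2) * ENNReal.ofReal q ^ (n : ℝ) := by
    calc _ = (ENNReal.ofReal c * volume (ball (0 : E) 1)) *
          (ENNReal.ofReal t * ENNReal.ofReal q ^ (n : ℝ)) := by
            rw [ENNReal.ofReal_mul hc]; ring
      _ ≤ ENNReal.ofReal (1 / 2) * (ENNReal.ofReal t * ENNReal.ofReal q ^ (n : ℝ)) := by gcongr
      _ = _ := by
          rw [← mul_assoc, ← ENNReal.ofReal_mul (by norm_num)]; congr 2; ring
  have h3 : ENNReal.ofReal t * ENNReal.ofReal (q : ℝ) ^ (n : ℝ) =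
      ENNReal.ofReal (t / 2) * ENNReal.ofReal q ^ (n : ℝ) +
        ENNReal.ofReal (t / 2) * ENNReal.ofReal q ^ (n : ℝ) := by
    rw [← add_mul, ← ENNReal.ofReal_add (by positivity) (by positivity), add_halves]
  rw [h3] at h1
  exact lt_of_add_lt_add_right (h1.trans_le (add_le_add_right h2 _))

/-- The Hardy-Littlewood maximal inequality in `L^s`, `1 < s`. -/
lemma maxFun_strong (hn : 0 < n) {f : E → ℝ≥0∞} (hf : Measurable f) {s : ℝ} (hs : 1 < s)
    (hfs : ∫⁻ y, f y ^ s < ⊤) : ∫⁻ x, maxFun f x ^ s < ⊤ := by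
  have hs0 : 0 < s := by linarith
  have hV0 : volume (ball (0 : E) 1) ≠ 0 := (measure_ball_pos _ _ one_pos).ne'
  have hV : volume (ball (0 : E) 1) ≠ ⊤ := measure_ball_lt_top.ne
  set V : ℝ := (volume (ball (0 : E) 1)).toReal with hVdef
  have hVpos : 0 < V := ENNReal.toReal_pos hV0 hV
  set c : ℝ := 1 / (2 * V) with hcdef
  have hc : 0 < c := by positivity
  have hcV : ENNReal.ofReal c * volume (ball (0 : E) 1) ≤ ENNReal.ofReal (1 / 2) := by
    rw [← ENNReal.ofReal_toReal hV, ← ENNReal.ofReal_mul hc.le]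
    apply ENNReal.ofReal_le_ofReal
    rw [hcdef, ← hVdef]; apply le_of_eq; field_simp
  set K : ℝ≥0∞ := ENNReal.ofReal 5 ^ (n : ℝ) * volume (ball (0 : E) 1) with hK
  have hKtop : K ≠ ⊤ := ENNReal.mul_ne_top (by simp) hV
  have hM := measurable_maxFun hf
  have m1 : Measurable (Function.uncurry fun (x : E) (t : ℝ) =>
      if ENNReal.ofReal t < maxFun f x then ENNReal.ofReal t ^ (s - 1) else 0) :=
    Measurable.ite (measurableSet_lt (by fun_prop) (by fun_prop)) (by fun_prop) measurable_const
  have m2 : Measurable (Function.uncurry fun (t : ℝ) (y : E) =>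
      ENNReal.ofReal t ^ (s - 1 - 1) * if ENNReal.ofReal (c * t) < f y then f y else 0) :=
    Measurable.mul (by fun_prop)
      (Measurable.ite (measurableSet_lt (by fun_prop) (by fun_prop)) (by fun_prop)
        measurable_const)
  have step : ∀ t : ℝ, 0 < t →
      ∫⁻ x : E, (if ENNReal.ofReal t < maxFun f x then ENNReal.ofReal t ^ (s - 1) else 0) ≤
      2 * K * ∫⁻ y : E, ENNReal.ofReal t ^ (s - 1 - 1) *
        (if ENNReal.ofReal (c * t) < f y then f y else 0) := by
    intro t ht
    have h0 : ENNReal.ofReal t ≠ 0 := by simpa using ht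
    have e1 : ∫⁻ x : E, (if ENNReal.ofReal t < maxFun f x then ENNReal.ofReal t ^ (s - 1) else 0)
        = ENNReal.ofReal t ^ (s - 1) * volume {x : E | ENNReal.ofReal t < maxFun f x} := by
      rw [← setLIntegral_const, ← lintegral_indicator (measurableSet_lt measurable_const hM)]
      simp only [indicator, mem_ofPred_eq]
    have e2 : ENNReal.ofReal t ^ (s - 1) =
        2 * ENNReal.ofReal t ^ (s - 1 - 1) * ENNReal.ofReal (t / 2) := by
      have : ENNReal.ofReal t = 2 * ENNReal.ofReal (t / 2) := by
        rw [← ENNReal.ofReal_ofNat 2, ← ENNReal.ofReal_mul (by norm_num)]; congr 1; ring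
      calc ENNReal.ofReal t ^ (s - 1) = ENNReal.ofReal t ^ ((s - 1 - 1) + 1) := by congr 1; ring
        _ = ENNReal.ofReal t ^ (s - 1 - 1) * ENNReal.ofReal t := by
            rw [ENNReal.rpow_add _ _ h0 ENNReal.ofReal_ne_top, ENNReal.rpow_one]
        _ = ENNReal.ofReal t ^ (s - 1 - 1) * (2 * ENNReal.ofReal (t / 2)) := by rw [← this]
        _ = _ := by ring
    rw [e1, e2, mul_assoc, lintegral_const_mul _
      (Measurable.ite (measurableSet_lt measurable_const hf) hf measurable_const)]
    calc _ ≤ 2 * ENNReal.ofReal t ^ (s - 1 - 1) * (K *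
          ∫⁻ y : E, (if ENNReal.ofReal (c * t) < f y then f y else 0)) :=
          mul_le_mul_right (volume_maxFun_gt_le hn f ht hc.le hcV) _
      _ = _ := by ring
  have inner : ∀ y : E, ∫⁻ t in Ioi (0 : ℝ), ENNReal.ofReal t ^ (s - 1 - 1) *
        (if ENNReal.ofReal (c * t) < f y then f y else 0) ≤
      ENNReal.ofReal ((1 / c) ^ (s - 1) / (s - 1)) * f y ^ s := by
    intro y
    calc _ = ∫⁻ t in Ioi (0 : ℝ), f y * (if ENNReal.ofReal (c * t) < f y then
            ENNReal.ofReal t ^ (s - 1 - 1) else 0) := by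
          congr 1; ext t; split_ifs <;> simp [mul_comm]
      _ = f y * ∫⁻ t in Ioi (0 : ℝ), (if ENNReal.ofReal (c * t) < f y then
            ENNReal.ofReal t ^ (s - 1 - 1) else 0) := by
          rw [lintegral_const_mul]
          exact Measurable.ite (measurableSet_lt (by fun_prop) (by fun_prop)) (by fun_prop)
            measurable_const
      _ ≤ f y * (ENNReal.ofReal ((1 / c) ^ (s - 1) / (s - 1)) * f y ^ (s - 1)) := by
          gcongr; exact lintegral_layer_le (by linarith) hc _
      _ = _ := by
          have : f y ^ s = f y * f y ^ (s - 1) := by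
            conv_lhs => rw [show s = 1 + (s - 1) by ring]
            rw [ENNReal.rpow_add_of_nonneg _ _ (by norm_num) (by linarith), ENNReal.rpow_one]
          rw [this]; ring
  calc ∫⁻ x, maxFun f x ^ s
      ≤ ∫⁻ x, ENNReal.ofReal s * ∫⁻ t in Ioi (0 : ℝ),
          (if ENNReal.ofReal t < maxFun f x then ENNReal.ofReal t ^ (s - 1) else 0) :=
        lintegral_mono fun x => rpow_le_lintegral hs0 _
    _ = ENNReal.ofReal s * ∫⁻ t in Ioi (0 : ℝ), ∫⁻ x : E,
          (if ENNReal.ofReal t < maxFun f x then ENNReal.ofReal t ^ (s - 1) else 0) := by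
        rw [lintegral_const_mul' _ _ ENNReal.ofReal_ne_top, lintegral_lintegral_swap]
        exact m1.aemeasurable
    _ ≤ ENNReal.ofReal s * ∫⁻ t in Ioi (0 : ℝ), 2 * K * ∫⁻ y : E,
          ENNReal.ofReal t ^ (s - 1 - 1) *
            (if ENNReal.ofReal (c * t) < f y then f y else 0) := by
        gcongr 1
        exact setLIntegral_mono' measurableSet_Ioi fun t ht => step t ht
    _ = ENNReal.ofReal s * (2 * K * ∫⁻ y : E, ∫⁻ t in Ioi (0 : ℝ),
          ENNReal.ofReal t ^ (s - 1 - 1) *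
            (if ENNReal.ofReal (c * t) < f y then f y else 0)) := by
        rw [lintegral_const_mul' _ _ (ENNReal.mul_ne_top (by simp) hKtop),
          lintegral_lintegral_swap]
        exact m2.aemeasurable
    _ ≤ ENNReal.ofReal s * (2 * K * ∫⁻ y : E,
          ENNReal.ofReal ((1 / c) ^ (s - 1) / (s - 1)) * f y ^ s) := by
        gcongr with y
        exact inner y
    _ < ⊤ := by
        rw [lintegral_const_mul' _ _ ENNReal.ofReal_ne_top]
        exact ENNReal.mul_lt_top ENNReal.ofReal_lt_top
          (ENNReal.mul_lt_top (ENNReal.mul_lt_top (by simp) hKtop.lt_top)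
            (ENNReal.mul_lt_top ENNReal.ofReal_lt_top hfs))

/-! ### Ball integrals and the Riesz potential -/

lemma ballInt_le_holder (hn : 0 < n) {f : E → ℝ≥0∞} (hf : Measurable f) {s : ℝ} (hs : 1 < s)
    (x : E) {r : ℝ} (hr : 0 < r) :
    ballInt f r x ≤ ((∫⁻ y, f y ^ s) ^ (1 / s) * volume (ball (0 : E) 1) ^ (1 - 1 / s)) *
      ENNReal.ofReal r ^ ((n : ℝ) - n / s) := by
  have hs0 : 0 < s := by linarith
  have hs1 : 0 ≤ 1 - 1 / s := by
    rw [sub_nonneg, div_le_one hs0]; exact hs.le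
  have hpq := Real.HolderConjugate.conjExponent hs
  have hq : 1 / s.conjExponent = 1 - 1 / s := by
    have := hpq.inv_add_inv_eq_one
    rw [one_div, one_div]; linarith
  calc ballInt f r x = ∫⁻ y in ball x r, (f * (fun _ => 1 : E → ℝ≥0∞)) y := by simp [ballInt]
    _ ≤ (∫⁻ y in ball x r, f y ^ s) ^ (1 / s) *
        (∫⁻ y in ball x r, (1 : ℝ≥0∞) ^ s.conjExponent) ^ (1 / s.conjExponent) :=
        ENNReal.lintegral_mul_le_Lp_mul_Lq _ hpq hf.aemeasurable aemeasurable_const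
    _ ≤ (∫⁻ y, f y ^ s) ^ (1 / s) *
        (volume (ball x r)) ^ (1 - 1 / s) := by
        rw [hq]
        simp only [ENNReal.one_rpow, setLIntegral_one]
        exact mul_le_mul_left (ENNReal.rpow_le_rpow (setLIntegral_le_lintegral _ _)
          (by positivity)) _
    _ = _ := by
        rw [volume_ball_eq hn x hr.le, ENNReal.mul_rpow_of_nonneg _ _ hs1, ← ENNReal.rpow_mul,
          show (n : ℝ) * (1 - 1 / s) = n - n / s by ring]
        ring

/-- Tonelli, after writing the Riesz kernel as a superposition of indicators of balls. -/
lemma riesz_le_radial {f : E → ℝ≥0∞} (hf : Measurable f) {m : ℝ} (hm : m < n) (x : E) :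
    ∫⁻ y, edist x y ^ (m - n) * f y ≤ ENNReal.ofReal (n - m) *
      ∫⁻ r in Ioi (0 : ℝ), ENNReal.ofReal r ^ (m - n - 1) * ballInt f r x := by
  have m1 : Measurable (Function.uncurry fun (y : E) (r : ℝ) =>
      ENNReal.ofReal r ^ (m - n - 1) * if dist x y < r then f y else 0) :=
    Measurable.mul (by fun_prop)
      (Measurable.ite (measurableSet_lt (by fun_prop) (by fun_prop)) (by fun_prop)
        measurable_const)
  calc ∫⁻ y, edist x y ^ (m - n) * f y
      ≤ ∫⁻ y, ENNReal.ofReal (n - m) * ∫⁻ r in Ioi (0 : ℝ),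
          ENNReal.ofReal r ^ (m - n - 1) * if dist x y < r then f y else 0 := by
        refine lintegral_mono fun y => ?_
        have h := rpow_neg_le_lintegral (show 0 < (n : ℝ) - m by linarith)
          (dist_nonneg (x := x) (y := y))
        rw [neg_sub, ← edist_dist] at h
        calc _ ≤ _ := mul_le_mul_left h (f y)
          _ = _ := by
            rw [mul_assoc, ← lintegral_mul_const _ (Measurable.ite
              (measurableSet_lt (by fun_prop) (by fun_prop)) (by fun_prop) measurable_const)]
            congr 2; ext r; split_ifs <;> simp
    _ = _ := by
        rw [lintegral_const_mul' _ _ ENNReal.ofReal_ne_top,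
          lintegral_lintegral_swap m1.aemeasurable]
        congr 2; ext r
        rw [ballInt_eq, lintegral_const_mul]
        exact Measurable.ite (measurableSet_lt (by fun_prop) (by fun_prop)) (by fun_prop)
          measurable_const

end

/-! ### The energy estimate -/

theorem stmt12 {n : ℕ} (α c₀ β s : ℝ)
    (Ω : Set (EuclideanSpace ℝ (Fin n))) (hΩo : IsOpen Ω) (hΩne : Ω.Nonempty)
    (G : EuclideanSpace ℝ (Fin n) → EuclideanSpace ℝ (Fin n) → ℝ≥0∞)
    (hGpos : ∀ x ∈ Ω, ∀ y ∈ Ω, 0 < G x y)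
    (hc₀ : 0 < c₀) (hα0 : 0 < α) (hα : 2 * α < n)
    (hdom : ∀ x ∈ Ω, ∀ y ∈ Ω, G x y ≤ ENNReal.ofReal c₀ * (edist x y) ^ (2 * α - n))
    (hβ : 0 < β) (hs : s = n * (β + 1) / (n + 2 * α * β))
    (σ : EuclideanSpace ℝ (Fin n) → ℝ≥0∞) (hσm : Measurable σ)
    (hσpos : ∀ x ∈ Ω, 0 < σ x) (hσLs : (∫⁻ x in Ω, σ x ^ s) < ⊤) :
    (∫⁻ x in Ω, (kernelPot Ω G (volume.withDensity σ) x) ^ β * σ x) < ⊤ := by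
  have hnR : (0 : ℝ) < n := by linarith
  have hn : 0 < n := by exact_mod_cast hnR
  have hden : 0 < (n : ℝ) + 2 * α * β := by positivity
  have hs1 : 1 < s := by
    rw [hs, lt_div_iff₀ hden]; nlinarith
  have hs0 : 0 < s := by linarith
  have hsden : s * (n + 2 * α * β) = n * (β + 1) := by
    rw [hs]; field_simp
  have hν : 2 * α < n / s := by
    rw [lt_div_iff₀ hs0, hs, ← mul_div_assoc, div_lt_iff₀ hden]; nlinarith
  have hexp : (1 - 2 * α / (n / s)) * β = s - 1 := by
    field_simp; linarith
  have hθ : 0 < 1 - 2 * α / (n / s) := by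
    rw [sub_pos, div_lt_one (by positivity)]; exact hν
  set f : EuclideanSpace ℝ (Fin n) → ℝ≥0∞ := Ω.indicator σ with hfdef
  have hΩm : MeasurableSet Ω := hΩo.measurableSet
  have hf : Measurable f := hσm.indicator hΩm
  have hfs : ∫⁻ y, f y ^ s < ⊤ := by
    have : (fun y => f y ^ s) = Ω.indicator (fun y => σ y ^ s) := by
      ext y; by_cases hy : y ∈ Ω <;> simp [hfdef, hy, hs0]
    rw [this, lintegral_indicator hΩm]; exact hσLs
  have hMs := maxFun_strong hn hf hs1 hfs
  have hM := measurable_maxFun hf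
  -- adding `1` only serves to make the constant nonzero
  set b : ℝ≥0∞ := (∫⁻ y, f y ^ s) ^ (1 / s) *
    volume (ball (0 : EuclideanSpace ℝ (Fin n)) 1) ^ (1 - 1 / s) + 1 with hb
  have hb0 : b ≠ 0 := by simp [hb]
  have hbtop : b ≠ ⊤ := by
    refine ENNReal.add_ne_top.2 ⟨ENNReal.mul_ne_top ?_ ?_, ENNReal.one_ne_top⟩
    · exact ENNReal.rpow_ne_top_of_nonneg (by positivity) hfs.ne
    · refine ENNReal.rpow_ne_top_of_nonneg ?_ measure_ball_lt_top.ne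
      rw [sub_nonneg, div_le_one hs0]; exact hs1.le
  set D : ℝ≥0∞ := ENNReal.ofReal c₀ * (ENNReal.ofReal (n - 2 * α) *
    (ENNReal.ofReal (1 / (2 * α) + 1 / (n / s - 2 * α)) *
      ((ENNReal.ofReal 2 ^ (n : ℝ)) ^ (1 - 2 * α / (n / s)) * b ^ (2 * α / (n / s))))) with hD
  have hDtop : D ≠ ⊤ := by
    refine ENNReal.mul_ne_top ENNReal.ofReal_ne_top (ENNReal.mul_ne_top ENNReal.ofReal_ne_top
      (ENNReal.mul_ne_top ENNReal.ofReal_ne_top (ENNReal.mul_ne_top ?_ ?_)))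
    · exact ENNReal.rpow_ne_top_of_nonneg hθ.le
        (ENNReal.rpow_ne_top_of_nonneg (by positivity) ENNReal.ofReal_ne_top)
    · exact ENNReal.rpow_ne_top_of_nonneg (by positivity) hbtop
  -- Hedberg's pointwise inequality
  have hpt : ∀ x ∈ Ω, kernelPot Ω G (volume.withDensity σ) x ≤
      D * maxFun f x ^ (1 - 2 * α / (n / s)) := by
    intro x hx
    have hker : Measurable fun y : EuclideanSpace ℝ (Fin n) =>
        ENNReal.ofReal c₀ * edist x y ^ (2 * α - n) := by fun_prop
    calc kernelPot Ω G (volume.withDensity σ) x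
        ≤ ∫⁻ y in Ω, ENNReal.ofReal c₀ * edist x y ^ (2 * α - n) ∂(volume.withDensity σ) :=
          setLIntegral_mono' hΩm fun y hy => hdom x hx y hy
      _ = ∫⁻ y in Ω, (σ * fun y => ENNReal.ofReal c₀ * edist x y ^ (2 * α - n)) y :=
          setLIntegral_withDensity_eq_setLIntegral_mul _ hσm hker hΩm
      _ = ∫⁻ y, ENNReal.ofReal c₀ * (edist x y ^ (2 * α - n) * f y) := by
          rw [← lintegral_indicator hΩm]
          congr 1; ext y
          by_cases hy : y ∈ Ω
          · simp [hfdef, hy]; ring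
          · simp [hfdef, hy]
      _ = ENNReal.ofReal c₀ * ∫⁻ y, edist x y ^ (2 * α - n) * f y :=
          lintegral_const_mul' _ _ ENNReal.ofReal_ne_top
      _ ≤ ENNReal.ofReal c₀ * (ENNReal.ofReal (n - 2 * α) *
            ∫⁻ r in Ioi (0 : ℝ), ENNReal.ofReal r ^ (2 * α - n - 1) * ballInt f r x) :=
          mul_le_mul_right (riesz_le_radial hf hα x) _
      _ ≤ ENNReal.ofReal c₀ * (ENNReal.ofReal (n - 2 * α) *
            (ENNReal.ofReal (1 / (2 * α) + 1 / (n / s - 2 * α)) *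
              ((ENNReal.ofReal 2 ^ (n : ℝ) * maxFun f x) ^ (1 - 2 * α / (n / s)) *
                b ^ (2 * α / (n / s))))) := by
          refine mul_le_mul_right (mul_le_mul_right ?_ _) _
          refine hedberg_radial (by positivity) hν hb0 hbtop _
            (fun r hr => ballInt_le_maxFun f x hr) fun r hr => ?_
          exact (ballInt_le_holder hn hf hs1 x hr).trans (mul_le_mul_left le_self_add _)
      _ = _ := by
          rw [ENNReal.mul_rpow_of_nonneg _ _ hθ.le, hD]; ring
  have hpq : (s.conjExponent).HolderConjugate s := (Real.HolderConjugate.conjExponent hs1).symm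
  have hq : (s - 1) * s.conjExponent = s := by
    rw [Real.conjExponent]
    have : s - 1 ≠ 0 := by linarith
    field_simp
  calc ∫⁻ x in Ω, (kernelPot Ω G (volume.withDensity σ) x) ^ β * σ x
      ≤ ∫⁻ x in Ω, D ^ β * (maxFun f x ^ (s - 1) * f x) := by
        refine setLIntegral_mono' hΩm fun x hx => ?_
        have hfx : f x = σ x := by simp [hfdef, hx]
        calc _ ≤ (D * maxFun f x ^ (1 - 2 * α / (n / s))) ^ β * σ x :=
              mul_le_mul_left (ENNReal.rpow_le_rpow (hpt x hx) hβ.le) _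
          _ = _ := by
              rw [ENNReal.mul_rpow_of_nonneg _ _ hβ.le, ← ENNReal.rpow_mul, hexp, hfx, mul_assoc]
    _ ≤ ∫⁻ x, D ^ β * (maxFun f x ^ (s - 1) * f x) := setLIntegral_le_lintegral _ _
    _ = D ^ β * ∫⁻ x, ((fun x => maxFun f x ^ (s - 1)) * f) x :=
        lintegral_const_mul' _ _ (ENNReal.rpow_ne_top_of_nonneg hβ.le hDtop)
    _ ≤ D ^ β * ((∫⁻ x, (maxFun f x ^ (s - 1)) ^ s.conjExponent) ^ (1 / s.conjExponent) *
          (∫⁻ x, f x ^ s) ^ (1 / s)) :=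
        mul_le_mul_right (ENNReal.lintegral_mul_le_Lp_mul_Lq _ hpq
          (hM.pow_const _).aemeasurable hf.aemeasurable) _
    _ < ⊤ := by
        simp only [← ENNReal.rpow_mul, hq]
        refine ENNReal.mul_lt_top (ENNReal.rpow_lt_top_of_nonneg hβ.le hDtop)
          (ENNReal.mul_lt_top (ENNReal.rpow_lt_top_of_nonneg ?_ hMs.ne)
            (ENNReal.rpow_lt_top_of_nonneg (by positivity) hfs.ne))
        exact one_div_nonneg.2 hpq.nonneg
end

section
/- Let 1<p<∞, 0<α<n/p, t ≥ 1, and let σ be a nonzero nonnegative locally finite Borel measure on ℝⁿ. Then there exists a constant c = c(t,p,n,α) > 0 such that for all x ∈ ℝⁿ: (W_{α,p}σ(x))^t ≤ c · W_{α,p}((W_{α,p}σ)^{(t−1)(p−1)} dσ)(x). -/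
/-!
Fix `x`, write `d = n - α p`, `q = 1 / (p - 1)`, let `g` be the integrand of `W σ (x)`, and put
`G r = ∫_r^∞ g`, so that `W σ (x) = ∫_0^∞ g = A`.

If `y ∈ B(x, r)` and `u ≥ r`, then `B(x, u) ⊆ B(y, 2u)`; the substitution `u ↦ 2u` gives
`G r ≤ M * W σ (y)` with `M = 2 ^ (d q)` (`tail_le_wolffPot`). Therefore the integrand of the
potential on the right-hand side is at least `(G r / M) ^ (t - 1) * g r` (`integrand_le`), because
`(t - 1) (p - 1) q = t - 1`.

It remains to bound `∫ G ^ (t - 1) g` below by a multiple of `A ^ t`. Rather than integrating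
exactly, one uses that the part of the mass of `g dr` carried by `{G ≤ L}` is at most `L`
(`measure_tail_le`), so `{G > L}` carries at least `A - L`. Taking `L = A / 2` if `A < ∞`, and
`L = 1` if `A = ∞`, finishes the proof with `c = 2 ^ t * M ^ (t - 1)`.
-/

open MeasureTheory Metric Set ENNReal

/-- The Wolff potential `W_{α,p}μ(x) = ∫_0^∞ (μ(B(x,r))/r^{n-αp})^{1/(p-1)} dr/r`. -/
noncomputable def wolffPot (n : ℕ) (α p : ℝ)
    (μ : Measure (EuclideanSpace ℝ (Fin n))) (x : EuclideanSpace ℝ (Fin n)) : ℝ≥0∞ :=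
  ∫⁻ r in Ioi (0 : ℝ),
    (μ (ball x r) / ENNReal.ofReal (r ^ ((n : ℝ) - α * p))) ^ (1 / (p - 1)) *
      ENNReal.ofReal r⁻¹

/-- The integrand of the Wolff potential `wolffPot n α p μ x`. -/
noncomputable def wolffIntegrand (n : ℕ) (α p : ℝ)
    (μ : Measure (EuclideanSpace ℝ (Fin n))) (x : EuclideanSpace ℝ (Fin n)) (r : ℝ) : ℝ≥0∞ :=
  (μ (ball x r) / ENNReal.ofReal (r ^ ((n : ℝ) - α * p))) ^ (1 / (p - 1)) *
    ENNReal.ofReal r⁻¹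

/-- The constant `2 ^ ((n - α p) / (p - 1))` by which the Wolff integrand changes under doubling
of the radius. -/
noncomputable def doublingConst (n : ℕ) (α p : ℝ) : ℝ≥0∞ :=
  ENNReal.ofReal (2 ^ ((n : ℝ) - α * p)) ^ (1 / (p - 1))

lemma doublingConst_ne_top {n : ℕ} {α p : ℝ} (hp : 1 < p) : doublingConst n α p ≠ ⊤ :=
  ENNReal.rpow_ne_top_of_nonneg (by have : 0 < p - 1 := by linarith
                                    positivity) ENNReal.ofReal_ne_top

lemma doublingConst_ne_zero {n : ℕ} {α p : ℝ} : doublingConst n α p ≠ 0 := by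
  have h : 0 < ENNReal.ofReal ((2 : ℝ) ^ ((n : ℝ) - α * p)) := by
    rw [ENNReal.ofReal_pos]; positivity
  exact (ENNReal.rpow_pos h ENNReal.ofReal_ne_top).ne'

/-- The positive radii at which the tail of an atomless measure is at most `L` have total measure
at most `L`: up to its left endpoint, this set is an increasing union of such tails. -/
lemma measure_tail_le (ν : Measure ℝ) [NullSingletonClass ν] (L : ℝ≥0∞) :
    ν {r : ℝ | 0 < r ∧ ν (Ici r) ≤ L} ≤ L := by
  set E := {r : ℝ | 0 < r ∧ ν (Ici r) ≤ L} with hE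
  rcases E.eq_empty_or_nonempty with h | h
  · simp [h]
  have hb : BddBelow E := ⟨0, fun r hr => hr.1.le⟩
  have h1 : ν (Ioi (sInf E)) ≤ L := by
    obtain ⟨u, hu, hlt, hlim⟩ := exists_seq_strictAnti_tendsto (sInf E)
    have hU : (⋃ k, Ici (u k)) = Ioi (sInf E) :=
      iUnion_Ici_eq_Ioi_of_lt_of_tendsto hlt hlim
    have hm : Monotone fun k => Ici (u k) := fun i j hij => Ici_subset_Ici.2 (hu.antitone hij)
    rw [← hU, hm.measure_iUnion]
    refine iSup_le fun k => ?_
    obtain ⟨e, heE, he⟩ := exists_lt_of_csInf_lt h (hlt k)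
    exact (measure_mono (Ici_subset_Ici.2 he.le)).trans heE.2
  calc ν E ≤ ν (Ici (sInf E)) := measure_mono fun r hr => csInf_le hb hr
    _ = ν (Ioi (sInf E)) := (measure_congr Ioi_ae_eq_Ici).symm
    _ ≤ L := h1

lemma wolffIntegrand_le_double {n : ℕ} {α p : ℝ} (hp : 1 < p)
    (σ : Measure (EuclideanSpace ℝ (Fin n))) {x y : EuclideanSpace ℝ (Fin n)} {r u : ℝ}
    (hr : 0 < r) (hy : y ∈ ball x r) (hu : r ≤ u) :
    wolffIntegrand n α p σ x u ≤
      doublingConst n α p * (ENNReal.ofReal |2| * wolffIntegrand n α p σ y (2 * u)) := by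
  have hu0 : 0 < u := hr.trans_le hu
  have hq : 0 ≤ 1 / (p - 1) := by
    have : 0 < p - 1 := by linarith
    positivity
  have hsub : ball x u ⊆ ball y (2 * u) := by
    refine ball_subset_ball' ?_
    have : dist x y < r := by rw [dist_comm]; exact hy
    linarith
  have hone : ENNReal.ofReal |2| * ENNReal.ofReal (2 * u)⁻¹ = ENNReal.ofReal u⁻¹ := by
    rw [← ENNReal.ofReal_mul (abs_nonneg _)]
    congr 1
    rw [abs_of_pos (by norm_num)]
    field_simp
  unfold wolffIntegrand doublingConst
  set d := (n : ℝ) - α * p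
  have h2 : ENNReal.ofReal ((2 : ℝ) ^ d) ≠ 0 := by
    have : (0 : ℝ) < 2 ^ d := by positivity
    simpa using this
  have hbase : σ (ball x u) / ENNReal.ofReal (u ^ d) ≤
      ENNReal.ofReal (2 ^ d) * (σ (ball y (2 * u)) / ENNReal.ofReal ((2 * u) ^ d)) := by
    rw [Real.mul_rpow (by norm_num) hu0.le, ENNReal.ofReal_mul (by positivity), ← mul_div_assoc,
      ENNReal.mul_div_mul_left _ _ h2 ENNReal.ofReal_ne_top]
    gcongr
  calc _ ≤ (ENNReal.ofReal (2 ^ d) * (σ (ball y (2 * u)) / ENNReal.ofReal ((2 * u) ^ d)))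
          ^ (1 / (p - 1)) * ENNReal.ofReal u⁻¹ := by gcongr
    _ = _ := by rw [ENNReal.mul_rpow_of_nonneg _ _ hq, ← hone]; ring

/-- The tail beyond `r` of the potential at `x` is controlled by the potential at any point of
`B(x, r)`. -/
lemma tail_le_wolffPot {n : ℕ} {α p : ℝ} (hp : 1 < p)
    (σ : Measure (EuclideanSpace ℝ (Fin n))) {x y : EuclideanSpace ℝ (Fin n)} {r : ℝ}
    (hr : 0 < r) (hy : y ∈ ball x r) :
    ∫⁻ u in Ici r, wolffIntegrand n α p σ x u ≤ doublingConst n α p * wolffPot n α p σ y := by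
  have hcv := lintegral_image_eq_lintegral_abs_deriv_mul (s := Ici r) (f := fun u : ℝ => 2 * u)
    (f' := fun _ => 2) measurableSet_Ici
    (fun u _ => by simpa using ((hasDerivAt_id u).const_mul 2).hasDerivWithinAt)
    (fun a _ b _ h => by simpa using h) (wolffIntegrand n α p σ y)
  calc ∫⁻ u in Ici r, wolffIntegrand n α p σ x u
      ≤ ∫⁻ u in Ici r, doublingConst n α p *
          (ENNReal.ofReal |2| * wolffIntegrand n α p σ y (2 * u)) :=
        setLIntegral_mono' measurableSet_Ici fun u hu => wolffIntegrand_le_double hp σ hr hy hu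
    _ = doublingConst n α p * ∫⁻ v in (fun u : ℝ => 2 * u) '' Ici r,
          wolffIntegrand n α p σ y v := by
        rw [lintegral_const_mul' _ _ (doublingConst_ne_top hp), hcv]
    _ ≤ doublingConst n α p * wolffPot n α p σ y := by
        gcongr
        refine lintegral_mono_set ?_
        rintro _ ⟨u, hu, rfl⟩
        have : r ≤ u := hu
        simp only [mem_Ioi]
        linarith

lemma integrand_le {n : ℕ} {α p t : ℝ} (hp : 1 < p) (ht : 1 ≤ t)
    (σ : Measure (EuclideanSpace ℝ (Fin n))) {x : EuclideanSpace ℝ (Fin n)} {r : ℝ}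
    (hr : 0 < r) {L : ℝ≥0∞} (hL : L ≤ ∫⁻ u in Ici r, wolffIntegrand n α p σ x u) :
    (L / doublingConst n α p) ^ (t - 1) * wolffIntegrand n α p σ x r ≤
      wolffIntegrand n α p
        (σ.withDensity (fun y => (wolffPot n α p σ y) ^ ((t - 1) * (p - 1)))) x r := by
  have hp' : 0 < p - 1 := by linarith
  have hq : 0 ≤ 1 / (p - 1) := by positivity
  have hs : 0 ≤ (t - 1) * (p - 1) := mul_nonneg (by linarith) hp'.le
  have hball : (L / doublingConst n α p) ^ ((t - 1) * (p - 1)) * σ (ball x r) ≤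
      σ.withDensity (fun y => (wolffPot n α p σ y) ^ ((t - 1) * (p - 1))) (ball x r) := by
    rw [withDensity_apply _ measurableSet_ball, ← setLIntegral_const]
    refine setLIntegral_mono' measurableSet_ball fun y hy => ?_
    refine ENNReal.rpow_le_rpow (ENNReal.div_le_of_le_mul' ?_) hs
    exact hL.trans (tail_le_wolffPot hp σ hr hy)
  have hexp : (t - 1) * (p - 1) * (1 / (p - 1)) = t - 1 := by field_simp
  unfold wolffIntegrand
  calc _ = ((L / doublingConst n α p) ^ ((t - 1) * (p - 1)) * σ (ball x r) /
          ENNReal.ofReal (r ^ ((n : ℝ) - α * p))) ^ (1 / (p - 1)) * ENNReal.ofReal r⁻¹ := by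
        rw [mul_div_assoc, ENNReal.mul_rpow_of_nonneg _ _ hq, ← ENNReal.rpow_mul, hexp, mul_assoc]
    _ ≤ _ := by gcongr

/-- Chebyshev-type lower bound for the weighted potential: the radii whose tail exceeds `L` carry
at least `W σ (x) - L` of the mass, and on them the weight is at least `(L / M) ^ (t - 1)`. -/
lemma chebyshev_bound {n : ℕ} {α p t : ℝ} (hp : 1 < p) (ht : 1 ≤ t)
    (σ : Measure (EuclideanSpace ℝ (Fin n))) (x : EuclideanSpace ℝ (Fin n)) (L : ℝ≥0∞) :
    (L / doublingConst n α p) ^ (t - 1) * (wolffPot n α p σ x - L) ≤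
      wolffPot n α p
        (σ.withDensity (fun y => (wolffPot n α p σ y) ^ ((t - 1) * (p - 1)))) x := by
  set g := wolffIntegrand n α p σ x with hg
  set ν : Measure ℝ := volume.withDensity g with hν
  have hG : ∀ r, ν (Ici r) = ∫⁻ u in Ici r, g u := fun r =>
    withDensity_apply _ measurableSet_Ici
  have hanti : Antitone fun r => ν (Ici r) := fun a b h => measure_mono (Ici_subset_Ici.2 h)
  set S := {r : ℝ | 0 < r ∧ L < ν (Ici r)} with hS
  have hSm : MeasurableSet S :=
    measurableSet_Ioi.inter (measurableSet_lt measurable_const hanti.measurable)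
  have hA : wolffPot n α p σ x = ν (Ioi 0) := (withDensity_apply _ measurableSet_Ioi).symm
  have hcover : ν (Ioi 0) ≤ ν S + L := by
    calc ν (Ioi 0) ≤ ν (S ∪ {r : ℝ | 0 < r ∧ ν (Ici r) ≤ L}) := by
          refine measure_mono fun r hr => ?_
          rcases lt_or_ge L (ν (Ici r)) with h | h
          · exact Or.inl ⟨hr, h⟩
          · exact Or.inr ⟨hr, h⟩
      _ ≤ ν S + ν {r : ℝ | 0 < r ∧ ν (Ici r) ≤ L} := measure_union_le _ _
      _ ≤ ν S + L := by gcongr; exact measure_tail_le ν L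
  calc (L / doublingConst n α p) ^ (t - 1) * (wolffPot n α p σ x - L)
      ≤ (L / doublingConst n α p) ^ (t - 1) * ∫⁻ r in S, g r := by
        rw [← withDensity_apply _ hSm, hA]
        gcongr
        exact tsub_le_iff_right.2 hcover
    _ ≤ ∫⁻ r in S, (L / doublingConst n α p) ^ (t - 1) * g r := lintegral_const_mul_le _ _
    _ ≤ ∫⁻ r in S, wolffIntegrand n α p
          (σ.withDensity (fun y => (wolffPot n α p σ y) ^ ((t - 1) * (p - 1)))) x r :=
        setLIntegral_mono' hSm fun r hr =>
          integrand_le hp ht σ hr.1 (by rw [← hg, ← hG]; exact hr.2.le)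
    _ ≤ _ := lintegral_mono_set fun r hr => hr.1

theorem stmt13 {n : ℕ} (p α t : ℝ) (hp : 1 < p) (hα0 : 0 < α) (hα : α < n / p)
    (ht : 1 ≤ t) :
    ∃ c : ℝ, 0 < c ∧
      ∀ σ : Measure (EuclideanSpace ℝ (Fin n)), IsLocallyFiniteMeasure σ → σ ≠ 0 →
        ∀ x, (wolffPot n α p σ x) ^ t ≤
          ENNReal.ofReal c *
            wolffPot n α p
              (σ.withDensity (fun y => (wolffPot n α p σ y) ^ ((t - 1) * (p - 1)))) x := by
  have ht1 : 0 ≤ t - 1 := by linarith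
  have ht0 : 0 < t := by linarith
  set M := doublingConst n α p with hM
  have hMt : M ≠ ⊤ := doublingConst_ne_top hp
  have hM0 : M ≠ 0 := doublingConst_ne_zero
  have hMpt : M ^ (t - 1) ≠ ⊤ := ENNReal.rpow_ne_top_of_nonneg ht1 hMt
  have hMp0 : M ^ (t - 1) ≠ 0 := (ENNReal.rpow_pos (pos_iff_ne_zero.2 hM0) hMt).ne'
  have h2t : (2 : ℝ≥0∞) ^ t ≠ ⊤ := ENNReal.rpow_ne_top_of_nonneg ht0.le (by simp)
  have h20 : (2 : ℝ≥0∞) ^ t ≠ 0 := (ENNReal.rpow_pos (by simp) (by simp)).ne'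
  have hct : 2 ^ t * M ^ (t - 1) ≠ ⊤ := ENNReal.mul_ne_top h2t hMpt
  have hc0 : 2 ^ t * M ^ (t - 1) ≠ 0 := mul_ne_zero h20 hMp0
  refine ⟨(2 ^ t * M ^ (t - 1)).toReal, ENNReal.toReal_pos hc0 hct, fun σ _ _ x => ?_⟩
  rw [ENNReal.ofReal_toReal hct]
  have key := chebyshev_bound (α := α) hp ht σ x
  rw [← hM] at key
  set A := wolffPot n α p σ x
  by_cases hA : A = ⊤
  · have h1 := key 1
    have hne : (1 / M) ^ (t - 1) ≠ 0 :=
      (ENNReal.rpow_pos (ENNReal.div_pos one_ne_zero hMt)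
        (ENNReal.div_ne_top one_ne_top hM0)).ne'
    rw [hA, ENNReal.top_sub one_ne_top, ENNReal.mul_top hne, top_le_iff] at h1
    rw [h1, ENNReal.mul_top hc0]
    exact le_top
  · have h1 := key (A / 2)
    rw [ENNReal.sub_half hA, ENNReal.div_rpow_of_nonneg _ _ ht1] at h1
    have hsplit : (A / 2) ^ t = (A / 2) ^ (t - 1) * (A / 2) := by
      conv_lhs => rw [show t = (t - 1) + 1 by ring]
      rw [ENNReal.rpow_add_of_nonneg _ _ ht1 zero_le_one, ENNReal.rpow_one]
    calc A ^ t = 2 ^ t * (A / 2) ^ t := by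
          rw [← ENNReal.mul_rpow_of_nonneg _ _ ht0.le, ENNReal.mul_div_cancel (by simp) (by simp)]
      _ = 2 ^ t * M ^ (t - 1) * ((A / 2) ^ (t - 1) / M ^ (t - 1) * (A / 2)) := by
          rw [hsplit, mul_assoc, ← mul_assoc (M ^ (t - 1)), ENNReal.mul_div_cancel hMp0 hMpt]
      _ ≤ _ := by gcongr
end

section
/- Let 1<p<n, 0<q<p−1, 0<α<n/p, and let σ be a nonnegative locally finite Borel measure on ℝⁿ. Suppose u : ℝⁿ → [0,∞] is measurable, the measure u^q dσ is not the zero measure, and u(x) ≥ W_{α,p}(u^q dσ)(x) for all x ∈ ℝⁿ. Then there exists a constant c = c(α,n,p,q) > 0 such that u(x) ≥ c (W_{α,p}σ(x))^{(p−1)/(p−1−q)} for all x ∈ ℝⁿ. -/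
/-!
Write `W` for the Wolff potential, `N = n - α p > 0`, `b = 1 / (p - 1)`, `a = q b ∈ (0, 1)` and
`Γ = 1 / (1 - a) = (p - 1) / (p - 1 - q)`. The bound is obtained by iteration, first for the
restriction `τ` of `σ` to a ball `B` (which is a finite measure).

The heart of the matter is the inequality `W((Wτ)^s dτ) ≥ κ (Wτ)^(s b + 1)`. It follows from two
facts. For `y ∈ B(x,r)` one has `Wτ(y) ≥ δ F(r)`, where `F(r)` is the part of the integral defining
`Wτ(x)` over radii larger than `r` (`tail_le_of_mem_ball`). Consequently the left-hand side is at
least a multiple of `∫ F^(s b) (-F') dr`, which is at least a multiple of `F(0)^(s b + 1)`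
(`rpow_lintegral_le`).

Inserting a lower bound `u ≥ C (Wτ)^γ` into `u ≥ W(u^q dσ)` thus gives
`u ≥ C^a D (Wτ)^(a γ + 1)`, with `D` independent of `γ ≤ Γ` (`improve_lower_bound`). Since
`u^q dσ` is not zero, `u` is bounded below by some `m > 0` on `B` (`exists_lower_bound`), so the
iteration can start with `γ = 0`. After `j` steps it yields
`u ≥ m^(a^j) (D Wτ)^((1 - a^j) Γ)`, and as `j → ∞` the dependence on `m` disappears
(`restricted_bound`). Finally `B` increases to the whole space.
-/

open MeasureTheory Metric Set ENNReal

/-! ### Integrals over half-lines -/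

/-- A Lebesgue integral over a half-line, when finite, can be split into two equal halves: the
distribution function of an absolutely continuous finite measure has a median. -/
lemma exists_half_split (f : ℝ → ℝ≥0∞) (hf : Measurable f) (s : ℝ)
    (hA : ∫⁻ ρ in Ioi s, f ρ ≠ ⊤) :
    ∃ r, s ≤ r ∧ ∫⁻ ρ in Ioc s r, f ρ = (∫⁻ ρ in Ioi s, f ρ) / 2 ∧
      ∫⁻ ρ in Ioi r, f ρ = (∫⁻ ρ in Ioi s, f ρ) / 2 := by
  set A := ∫⁻ ρ in Ioi s, f ρ with hAdef
  suffices h : ∃ r, s ≤ r ∧ ∫⁻ ρ in Ioc s r, f ρ = A / 2 by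
    obtain ⟨r, hsr, hr⟩ := h
    refine ⟨r, hsr, hr, ?_⟩
    have hsum : A = (∫⁻ ρ in Ioc s r, f ρ) + ∫⁻ ρ in Ioi r, f ρ := by
      rw [hAdef, ← Ioc_union_Ioi_eq_Ioi hsr,
        lintegral_union measurableSet_Ioi (Ioc_disjoint_Ioi le_rfl)]
    have h2 : A / 2 ≠ ⊤ := (ENNReal.div_lt_top hA (by norm_num)).ne
    rw [hr] at hsum
    nth_rewrite 1 [← ENNReal.add_halves A] at hsum
    exact ((ENNReal.add_right_inj h2).1 hsum).symm
  rcases eq_or_ne A 0 with h0 | h0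
  · exact ⟨s, le_rfl, by simp [h0]⟩
  have hint : IntegrableOn (fun ρ => (f ρ).toReal) (Ioi s) :=
    integrable_toReal_of_lintegral_ne_top hf.aemeasurable hA
  have hfin : ∀ᵐ ρ ∂(volume.restrict (Ioi s)), f ρ < ⊤ := ae_lt_top hf hA
  -- The primitive of `f` is continuous on `[s, ∞)` and tends to `A`, hence takes the value `A / 2`.
  have hcont : ContinuousOn (fun r => ∫ ρ in s..r, (f ρ).toReal) (Ici s) := by
    have h1 : Continuous fun r => ∫ ρ in s..r, (Ioi s).indicator (fun ρ => (f ρ).toReal) ρ :=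
      intervalIntegral.continuous_primitive
        (fun a b => ((integrable_indicator_iff measurableSet_Ioi).2 hint).intervalIntegrable) s
    refine h1.continuousOn.congr fun r hr => ?_
    refine intervalIntegral.integral_congr_ae (Filter.Eventually.of_forall fun ρ hρ => ?_)
    rw [uIoc_of_le hr] at hρ
    simp [indicator_of_mem (show ρ ∈ Ioi s from hρ.1)]
  have hval : ∀ r, s ≤ r → ∫ ρ in s..r, (f ρ).toReal = (∫⁻ ρ in Ioc s r, f ρ).toReal := by
    intro r hr
    rw [intervalIntegral.integral_of_le hr, integral_toReal hf.aemeasurable]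
    exact ae_restrict_of_ae_restrict_of_subset Ioc_subset_Ioi_self hfin
  have hlim := intervalIntegral_tendsto_integral_Ioi s hint Filter.tendsto_id
  rw [integral_toReal hf.aemeasurable hfin] at hlim
  have hApos : 0 < A.toReal := ENNReal.toReal_pos h0 hA
  obtain ⟨b, hb, hsb⟩ := ((hlim.eventually (lt_mem_nhds (half_lt_self hApos))).and
    (Filter.eventually_ge_atTop s)).exists
  obtain ⟨r, hr, hreq⟩ := intermediate_value_Icc hsb (hcont.mono Icc_subset_Ici_self)
    (show A.toReal / 2 ∈ Icc _ _ from ⟨by simp; positivity, hb.le⟩)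
  refine ⟨r, hr.1, ?_⟩
  simp only at hreq
  rw [hval r hr.1] at hreq
  have hne : ∫⁻ ρ in Ioc s r, f ρ ≠ ⊤ :=
    ne_top_of_le_ne_top hA (lintegral_mono_set Ioc_subset_Ioi_self)
  rw [← ENNReal.toReal_eq_toReal_iff' hne (ENNReal.div_lt_top hA (by norm_num)).ne, hreq]
  simp

lemma setLIntegral_Ioi_zero_eq_iSup (f : ℝ → ℝ≥0∞) :
    ∫⁻ ρ in Ioi (0 : ℝ), f ρ = ⨆ k : ℕ, ∫⁻ ρ in Ioi (1 / ((k : ℝ) + 1)), f ρ := by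
  rw [← setLIntegral_iUnion_of_directed]
  · congr 2
    ext r
    simp only [mem_iUnion, mem_Ioi]
    exact ⟨fun h => exists_nat_one_div_lt h, fun ⟨k, hk⟩ => lt_trans (by positivity) hk⟩
  · refine Monotone.directed_le fun i j hij => Ioi_subset_Ioi ?_
    exact one_div_le_one_div_of_le (by positivity) (by simpa using hij)

/-- A substitute, with a worse constant, for the identity
`∫₀^∞ F(r)^t f(r) dr = F(0)^(t+1) / (t+1)` where `F(r) = ∫_r^∞ f`. On the part of `(s, ∞)` lying
to the left of the median of `f` on `(s, ∞)` the tail `F` is at least `F(s)/2`, and this part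
itself carries mass `F(s)/2`; then `s → 0`. No finiteness of `F(0)` is needed. -/
lemma rpow_lintegral_le (f : ℝ → ℝ≥0∞) (hf : Measurable f)
    (hfin : ∀ r, 0 < r → ∫⁻ ρ in Ioi r, f ρ ≠ ⊤) (t : ℝ) (ht : 0 ≤ t) :
    ((∫⁻ ρ in Ioi (0 : ℝ), f ρ) / 2) ^ (t + 1) ≤
      ∫⁻ r in Ioi (0 : ℝ), (∫⁻ ρ in Ioi r, f ρ) ^ t * f r := by
  rw [← ENNReal.le_rpow_inv_iff (by linarith), setLIntegral_Ioi_zero_eq_iSup, ENNReal.iSup_div]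
  refine iSup_le fun k => ?_
  rw [ENNReal.le_rpow_inv_iff (by linarith)]
  have hk : (0 : ℝ) < 1 / ((k : ℝ) + 1) := by positivity
  obtain ⟨r, hsr, h1, h2⟩ := exists_half_split f hf _ (hfin _ hk)
  set A := ∫⁻ ρ in Ioi (1 / ((k : ℝ) + 1)), f ρ
  calc (A / 2) ^ (t + 1) = (A / 2) ^ t * (A / 2) := by
        rw [ENNReal.rpow_add_of_nonneg _ _ ht zero_le_one, ENNReal.rpow_one]
    _ = ∫⁻ ρ in Ioc (1 / ((k : ℝ) + 1)) r, (A / 2) ^ t * f ρ := by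
        rw [lintegral_const_mul _ hf, h1]
    _ ≤ ∫⁻ ρ in Ioc (1 / ((k : ℝ) + 1)) r, (∫⁻ ρ in Ioi ρ, f ρ) ^ t * f ρ := by
        refine setLIntegral_mono' measurableSet_Ioc fun ρ hρ => ?_
        gcongr
        rw [← h2]
        exact lintegral_mono_set (Ioi_subset_Ioi hρ.2)
    _ ≤ _ := lintegral_mono_set fun ρ hρ => hk.trans hρ.1

/-! ### The integrand of the Wolff potential -/

/-- The integrand `(μ(B(x,r)) / r^N)^b / r` of the Wolff potential, with `N` in place of `n - α p`
and `b` in place of `1 / (p - 1)`. -/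
noncomputable def wolffDensity {n : ℕ} (N b : ℝ) (μ : Measure (EuclideanSpace ℝ (Fin n)))
    (x : EuclideanSpace ℝ (Fin n)) (r : ℝ) : ℝ≥0∞ :=
  (μ (ball x r) / ENNReal.ofReal (r ^ N)) ^ b * ENNReal.ofReal r⁻¹

section
variable {n : ℕ} {N b : ℝ} {μ : Measure (EuclideanSpace ℝ (Fin n))}

lemma measurable_wolffDensity (x : EuclideanSpace ℝ (Fin n)) :
    Measurable (wolffDensity N b μ x) := by
  have h : Measurable fun r : ℝ => μ (ball x r) :=
    Monotone.measurable fun r s h => measure_mono (ball_subset_ball h)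
  exact ((h.div (by fun_prop)).pow_const b).mul (by fun_prop)

lemma wolffDensity_tail_ne_top (hN : 0 < N) (hb : 0 < b) (hμ : μ univ ≠ ⊤)
    (x : EuclideanSpace ℝ (Fin n)) (r : ℝ) (hr : 0 < r) :
    ∫⁻ ρ in Ioi r, wolffDensity N b μ x ρ ≠ ⊤ := by
  have hint : IntegrableOn (fun ρ : ℝ => ρ ^ (-(N * b) - 1)) (Ioi r) :=
    integrableOn_Ioi_rpow_of_lt (by nlinarith [mul_pos hN hb]) hr
  have hle : ∫⁻ ρ in Ioi r, wolffDensity N b μ x ρ ≤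
      ∫⁻ ρ in Ioi r, (μ univ) ^ b * ENNReal.ofReal (ρ ^ (-(N * b) - 1)) := by
    refine setLIntegral_mono' measurableSet_Ioi fun ρ hρ => ?_
    have hρ0 : 0 < ρ := hr.trans hρ
    unfold wolffDensity
    rw [ENNReal.div_rpow_of_nonneg _ _ hb.le, div_eq_mul_inv, mul_assoc,
      ENNReal.ofReal_rpow_of_pos (by positivity), ← ENNReal.ofReal_inv_of_pos (by positivity),
      ← ENNReal.ofReal_mul (by positivity), ← Real.rpow_mul hρ0.le, ← Real.rpow_neg hρ0.le,
      ← Real.rpow_neg_one ρ, ← Real.rpow_add hρ0, ← sub_eq_add_neg]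
    gcongr
    exact subset_univ _
  refine ne_top_of_le_ne_top ?_ hle
  rw [lintegral_const_mul _ (by fun_prop)]
  exact ENNReal.mul_ne_top (ENNReal.rpow_ne_top_of_nonneg hb.le hμ) hint.setLIntegral_lt_top.ne

lemma setLIntegral_Ioi_comp_two_mul (f : ℝ → ℝ≥0∞) (hf : Measurable f) (r : ℝ) :
    ∫⁻ ρ in Ioi r, 2 * f (2 * ρ) = ∫⁻ ρ in Ioi (2 * r), f ρ := by
  have h2 : (fun x : ℝ => 2 * x) ⁻¹' Ioi (2 * r) = Ioi r := by ext; simp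
  conv_rhs =>
    rw [← Real.smul_map_volume_mul_left (two_ne_zero : (2 : ℝ) ≠ 0), Measure.restrict_smul,
      lintegral_smul_measure, setLIntegral_map measurableSet_Ioi hf (by fun_prop), h2]
  rw [lintegral_const_mul _ (by fun_prop)]
  simp

/-- Harnack-type comparison: for `y ∈ B(x,r)`, the Wolff potential at `y` controls the part of the
Wolff potential at `x` coming from radii larger than `r`, because `B(x,ρ) ⊆ B(y,2ρ)` for
`ρ > r`. -/
lemma tail_le_of_mem_ball (hb : 0 < b) {x y : EuclideanSpace ℝ (Fin n)} {r : ℝ} (hr : 0 < r)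
    (hy : y ∈ ball x r) :
    (ENNReal.ofReal (2 ^ N))⁻¹ ^ b * ∫⁻ ρ in Ioi r, wolffDensity N b μ x ρ ≤
      ∫⁻ ρ in Ioi (0 : ℝ), wolffDensity N b μ y ρ := by
  calc _ = ∫⁻ ρ in Ioi r, (ENNReal.ofReal (2 ^ N))⁻¹ ^ b * wolffDensity N b μ x ρ :=
        (lintegral_const_mul _ (measurable_wolffDensity x)).symm
    _ ≤ ∫⁻ ρ in Ioi r, 2 * wolffDensity N b μ y (2 * ρ) := by
        refine setLIntegral_mono' measurableSet_Ioi fun ρ hρ => ?_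
        have hρ0 : 0 < ρ := hr.trans hρ
        have hsub : ball x ρ ⊆ ball y (2 * ρ) := by
          refine ball_subset_ball' ?_
          rw [mem_ball'] at hy
          linarith [mem_Ioi.1 hρ]
        unfold wolffDensity
        have h1 : 2 * ((μ (ball y (2 * ρ)) / ENNReal.ofReal ((2 * ρ) ^ N)) ^ b *
              ENNReal.ofReal (2 * ρ)⁻¹) =
            (μ (ball y (2 * ρ)) / ENNReal.ofReal ((2 * ρ) ^ N)) ^ b * ENNReal.ofReal ρ⁻¹ := by
          have h2 : 2 * ENNReal.ofReal (2 * ρ)⁻¹ = ENNReal.ofReal ρ⁻¹ := by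
            rw [← ENNReal.ofReal_ofNat 2, ← ENNReal.ofReal_mul zero_le_two]
            congr 1
            field_simp
          rw [mul_left_comm, h2]
        rw [h1, Real.mul_rpow zero_le_two hρ0.le, ENNReal.ofReal_mul (by positivity),
          ← mul_assoc, ← ENNReal.mul_rpow_of_nonneg _ _ hb.le]
        gcongr ?_ ^ b * _
        rw [div_eq_mul_inv, div_eq_mul_inv,
          ENNReal.mul_inv (.inr ENNReal.ofReal_ne_top) (.inl ENNReal.ofReal_ne_top), mul_left_comm]
        gcongr
    _ = ∫⁻ ρ in Ioi (2 * r), wolffDensity N b μ y ρ :=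
        setLIntegral_Ioi_comp_two_mul _ (measurable_wolffDensity y) r
    _ ≤ _ := lintegral_mono_set (Ioi_subset_Ioi (by positivity))

/-! ### Bootstrapping the lower bound -/

/-- One step of the iteration: for a finite restriction `τ` of `σ`, a lower bound
`u ≥ C (Wτ)^γ` on `B` improves to an exponent `γ q b + 1`, at the price of replacing the
constant by `C^(q b)` times a factor which does not depend on `γ` as long as the exponents stay
below `Γ`. -/
lemma improve_lower_bound {σ : Measure (EuclideanSpace ℝ (Fin n))}
    {u : EuclideanSpace ℝ (Fin n) → ℝ≥0∞} {q Γ γ : ℝ} {B : Set (EuclideanSpace ℝ (Fin n))}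
    {C δ : ℝ≥0∞} (hN : 0 < N) (hb : 0 < b) (hq : 0 < q) (hγ : 0 ≤ γ)
    (hΓ : γ * (q * b) + 1 ≤ Γ) (hB : MeasurableSet B) (hσB : σ B ≠ ⊤)
    (hδ : δ = (ENNReal.ofReal (2 ^ N))⁻¹ ^ b)
    (hu : ∀ x, ∫⁻ r in Ioi (0 : ℝ), wolffDensity N b (σ.withDensity fun y => u y ^ q) x r ≤ u x)
    (h : ∀ y ∈ B, C * (∫⁻ r in Ioi (0 : ℝ), wolffDensity N b (σ.restrict B) y r) ^ γ ≤ u y)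
    (x : EuclideanSpace ℝ (Fin n)) :
    C ^ (q * b) * (δ / 2) ^ Γ *
      (∫⁻ r in Ioi (0 : ℝ), wolffDensity N b (σ.restrict B) x r) ^ (γ * (q * b) + 1) ≤ u x := by
  set τ := σ.restrict B with hτ
  have hδ1 : δ ≤ 1 := by
    rw [hδ]
    refine ENNReal.rpow_le_one ?_ hb.le
    rw [ENNReal.inv_le_one, ENNReal.one_le_ofReal]
    exact Real.one_le_rpow one_le_two hN.le
  have ha : 0 < q * b := mul_pos hq hb
  set t := γ * (q * b) with ht
  have ht0 : 0 ≤ t := by positivity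
  set f := wolffDensity N b τ x with hf
  have hτfin : τ univ ≠ ⊤ := by rwa [hτ, Measure.restrict_apply_univ]
  -- On `B ∩ B(x,r)` the hypothesis and the comparison of potentials bound `u` below by a constant.
  have hmass : ∀ r, 0 < r → (C * (δ * ∫⁻ ρ in Ioi r, f ρ) ^ γ) ^ q * τ (ball x r) ≤
      (σ.withDensity fun y => u y ^ q) (ball x r) := by
    intro r hr
    rw [withDensity_apply _ measurableSet_ball, hτ, Measure.restrict_apply measurableSet_ball,
      ← setLIntegral_const]
    refine (setLIntegral_mono' (measurableSet_ball.inter hB) fun y hy => ?_).trans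
      (lintegral_mono_set inter_subset_left)
    gcongr
    refine le_trans ?_ (h y hy.2)
    gcongr
    rw [hδ]
    exact tail_le_of_mem_ball hb hr hy.1
  calc _ ≤ C ^ (q * b) * (δ / 2) ^ (t + 1) * (∫⁻ r in Ioi (0 : ℝ), f r) ^ (t + 1) := by
        gcongr C ^ (q * b) * ?_ * _
        exact ENNReal.rpow_le_rpow_of_exponent_ge
          (ENNReal.div_le_of_le_mul (hδ1.trans (by norm_num))) hΓ
    _ = C ^ (q * b) * δ ^ (t + 1) * ((∫⁻ r in Ioi (0 : ℝ), f r) / 2) ^ (t + 1) := by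
        rw [ENNReal.div_rpow_of_nonneg _ _ (by positivity), ENNReal.div_rpow_of_nonneg _ _
          (by positivity), div_eq_mul_inv, div_eq_mul_inv]
        ring
    _ ≤ C ^ (q * b) * δ ^ t * ∫⁻ r in Ioi (0 : ℝ), (∫⁻ ρ in Ioi r, f ρ) ^ t * f r := by
        gcongr C ^ (q * b) * ?_ * ?_
        · exact ENNReal.rpow_le_rpow_of_exponent_ge hδ1 (by linarith)
        · exact rpow_lintegral_le f (measurable_wolffDensity x)
            (fun r hr => wolffDensity_tail_ne_top hN hb hτfin x r hr) t ht0
    _ ≤ ∫⁻ r in Ioi (0 : ℝ), C ^ (q * b) * δ ^ t * ((∫⁻ ρ in Ioi r, f ρ) ^ t * f r) :=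
        lintegral_const_mul_le _ _
    _ ≤ ∫⁻ r in Ioi (0 : ℝ), wolffDensity N b (σ.withDensity fun y => u y ^ q) x r := by
        refine setLIntegral_mono' measurableSet_Ioi fun r hr => ?_
        have h1 : C ^ (q * b) * δ ^ t * (∫⁻ ρ in Ioi r, f ρ) ^ t =
            ((C * (δ * ∫⁻ ρ in Ioi r, f ρ) ^ γ) ^ q) ^ b := by
          rw [← ENNReal.rpow_mul, ENNReal.mul_rpow_of_nonneg _ _ ha.le, ← ENNReal.rpow_mul,
            ENNReal.mul_rpow_of_nonneg _ _ ht0, mul_assoc]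
        rw [← mul_assoc, h1, hf]
        unfold wolffDensity
        rw [← mul_assoc, ← ENNReal.mul_rpow_of_nonneg _ _ hb.le, ← mul_div_assoc]
        gcongr
        exact hmass r hr
    _ ≤ u x := hu x

/-- The starting point of the iteration: the Wolff potential of a nonzero measure is bounded below
by a positive constant on each ball. The constant depends on the measure, but its influence
disappears in the limit of the iteration. -/
lemma exists_lower_bound (ν : Measure (EuclideanSpace ℝ (Fin n))) (hν : ν ≠ 0)
    (hN : 0 < N) (hb : 0 < b) {R : ℝ} (hR : 0 < R) :
    ∃ m : ℝ≥0∞, m ≠ 0 ∧ m ≠ ⊤ ∧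
      ∀ x ∈ ball (0 : EuclideanSpace ℝ (Fin n)) R,
        m ≤ ∫⁻ r in Ioi (0 : ℝ), wolffDensity N b ν x r := by
  obtain ⟨k, hk⟩ : ∃ k : ℕ, ν (ball 0 k) ≠ 0 := by
    by_contra! hcon
    refine hν (Measure.measure_univ_eq_zero.1 ?_)
    rw [← iUnion_ball_nat (0 : EuclideanSpace ℝ (Fin n))]
    exact measure_iUnion_null hcon
  set S : ℝ := R + k with hS
  have hS0 : 0 < S := by positivity
  set m := (ν (ball 0 k) / ENNReal.ofReal ((S + 1) ^ N)) ^ b * ENNReal.ofReal (S + 1)⁻¹ with hm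
  have hm0 : m ≠ 0 := by
    refine mul_ne_zero ?_ (by simp; positivity)
    refine (ENNReal.rpow_pos_of_nonneg ?_ hb.le).ne'
    exact ENNReal.div_pos hk ENNReal.ofReal_ne_top
  -- `m` may be infinite, when the ball has infinite measure.
  refine ⟨min m 1, by simp [min_eq_iff, hm0], ne_top_of_le_ne_top one_ne_top (min_le_right _ _),
    fun x hx => (min_le_left _ _).trans ?_⟩
  calc m = ∫⁻ _ in Ioc S (S + 1), m := by simp
    _ ≤ ∫⁻ r in Ioc S (S + 1), wolffDensity N b ν x r := by
        refine setLIntegral_mono' measurableSet_Ioc fun r hr => ?_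
        have hr0 : 0 < r := hS0.trans hr.1
        have hsub : ball (0 : EuclideanSpace ℝ (Fin n)) k ⊆ ball x r := by
          refine ball_subset_ball' ?_
          rw [mem_ball'] at hx
          linarith [hr.1]
        rw [hm]
        unfold wolffDensity
        gcongr
        · exact hr.2
        · exact hr.2
    _ ≤ _ := lintegral_mono_set fun r hr => hS0.trans hr.1

/-- Passage to the limit in the iteration: since `a ^ j → 0`, the initial constant `m` enters with
an exponent tending to `0`. -/
lemma rpow_le_of_forall {m X U : ℝ≥0∞} {a Γ : ℝ} (hm0 : m ≠ 0) (hm : m ≠ ⊤) (ha0 : 0 < a)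
    (ha1 : a < 1) (hΓ : 0 < Γ) (h : ∀ j : ℕ, m ^ (a ^ j) * X ^ ((1 - a ^ j) * Γ) ≤ U) :
    X ^ Γ ≤ U := by
  rcases eq_or_ne X 0 with rfl | hX0
  · simp [ENNReal.zero_rpow_of_pos hΓ]
  rcases eq_or_ne X ⊤ with rfl | hX
  · have h1 := h 1
    rw [ENNReal.top_rpow_of_pos (by rw [pow_one]; exact mul_pos (by linarith) hΓ),
      ENNReal.mul_top (ENNReal.rpow_pos (pos_iff_ne_zero.2 hm0) hm).ne'] at h1
    exact le_top.trans h1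
  lift m to NNReal using hm
  lift X to NNReal using hX
  have hm0' : m ≠ 0 := by simpa using hm0
  have hX0' : X ≠ 0 := by simpa using hX0
  have hpow : Filter.Tendsto (fun j : ℕ => a ^ j) Filter.atTop (nhds 0) :=
    tendsto_pow_atTop_nhds_zero_of_lt_one ha0.le ha1
  have hc : Continuous fun s : ℝ => m ^ s * X ^ ((1 - s) * Γ) := by
    refine continuous_iff_continuousAt.2 fun s => ?_
    exact (tendsto_const_nhds.nnrpow Filter.tendsto_id (.inl hm0')).mul
      (tendsto_const_nhds.nnrpow
        (show ContinuousAt (fun s : ℝ => (1 - s) * Γ) s by fun_prop) (.inl hX0'))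
  have hlim := ENNReal.tendsto_coe.2 ((hc.tendsto 0).comp hpow)
  have h0 : m ^ (0 : ℝ) * X ^ ((1 - 0) * Γ) = X ^ Γ := by simp
  rw [h0] at hlim
  rw [← ENNReal.coe_rpow_of_ne_zero hX0']
  refine le_of_tendsto' hlim fun j => ?_
  have := h j
  rw [← ENNReal.coe_rpow_of_ne_zero hX0', ← ENNReal.coe_rpow_of_ne_zero hm0',
    ← ENNReal.coe_mul] at this
  exact this

/-- The conclusion for the finite measure `σ.restrict B`, at points of `B`, with a constant
independent of `B`, `σ` and of the initial lower bound `m`. -/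
lemma restricted_bound {σ : Measure (EuclideanSpace ℝ (Fin n))}
    {u : EuclideanSpace ℝ (Fin n) → ℝ≥0∞} {q Γ : ℝ} {B : Set (EuclideanSpace ℝ (Fin n))}
    {m δ : ℝ≥0∞} (hN : 0 < N) (hb : 0 < b) (hq : 0 < q) (ha1 : q * b < 1)
    (hΓ : Γ = 1 / (1 - q * b)) (hB : MeasurableSet B) (hσB : σ B ≠ ⊤)
    (hδ : δ = (ENNReal.ofReal (2 ^ N))⁻¹ ^ b)
    (hu : ∀ x, ∫⁻ r in Ioi (0 : ℝ), wolffDensity N b (σ.withDensity fun y => u y ^ q) x r ≤ u x)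
    (hm0 : m ≠ 0) (hm : m ≠ ⊤) (hmu : ∀ x ∈ B, m ≤ u x) (x : EuclideanSpace ℝ (Fin n))
    (hx : x ∈ B) :
    ((δ / 2) ^ Γ * ∫⁻ r in Ioi (0 : ℝ), wolffDensity N b (σ.restrict B) x r) ^ Γ ≤ u x := by
  have ha0 : 0 < q * b := mul_pos hq hb
  set a := q * b with ha
  have h1a : 0 < 1 - a := by linarith
  have hΓ0 : 0 < Γ := by rw [hΓ]; positivity
  -- The limit exponent `Γ` is the fixed point of `γ ↦ a γ + 1`; starting from `0`, the `j`-th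
  -- iterate of this map is `(1 - a ^ j) Γ`.
  have hΓa : a * Γ + 1 = Γ := by rw [hΓ]; field_simp; ring
  refine rpow_le_of_forall hm0 hm ha0 ha1 hΓ0 fun j => ?_
  induction j generalizing x with
  | zero => simpa using hmu x hx
  | succ j ih =>
    have hj0 : 0 ≤ 1 - a ^ j := by linarith [pow_le_one₀ (n := j) ha0.le ha1.le]
    have hj1 : 0 ≤ 1 - a ^ (j + 1) := by linarith [pow_le_one₀ (n := j + 1) ha0.le ha1.le]
    have hexp : (1 - a ^ j) * Γ * a + 1 = (1 - a ^ (j + 1)) * Γ := by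
      rw [pow_succ]; linear_combination hΓa
    have key := improve_lower_bound (γ := (1 - a ^ j) * Γ) (Γ := Γ)
      (C := m ^ (a ^ j) * ((δ / 2) ^ Γ) ^ ((1 - a ^ j) * Γ)) hN hb hq (by positivity)
      (by rw [← ha, hexp]; nlinarith [pow_pos ha0 (j + 1)]) hB hσB hδ hu
      (fun y hy => by
        rw [mul_assoc, ← ENNReal.mul_rpow_of_nonneg _ _ (by positivity)]
        exact ih y hy) x
    rw [← ha, hexp, ENNReal.mul_rpow_of_nonneg _ _ ha0.le, ← ENNReal.rpow_mul,
      ← ENNReal.rpow_mul, ← pow_succ, mul_assoc (m ^ (a ^ (j + 1)))] at key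
    nth_rewrite 2 [← ENNReal.rpow_one ((δ / 2) ^ Γ)] at key
    rw [← ENNReal.rpow_add_of_nonneg _ _ (by positivity) zero_le_one, hexp, mul_assoc,
      ← ENNReal.mul_rpow_of_nonneg _ _ (by positivity)] at key
    exact key

lemma setLIntegral_Ioi_zero_eq_iSup_Ioc (f : ℝ → ℝ≥0∞) :
    ∫⁻ ρ in Ioi (0 : ℝ), f ρ = ⨆ k : ℕ, ∫⁻ ρ in Ioc (0 : ℝ) k, f ρ := by
  rw [← setLIntegral_iUnion_of_directed]
  · congr 2
    ext r
    simp only [mem_iUnion, mem_Ioi, mem_Ioc]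
    exact ⟨fun h => (exists_nat_ge r).imp fun k hk => ⟨h, hk⟩, fun ⟨k, hk⟩ => hk.1⟩
  · exact Monotone.directed_le fun i j hij => Ioc_subset_Ioc_right (by exact_mod_cast hij)

end

theorem stmt15 {n : ℕ} (p q α : ℝ) (hp : 1 < p) (hpn : p < n)
    (hq0 : 0 < q) (hq : q < p - 1) (hα0 : 0 < α) (hα : α < n / p) :
    ∃ c : ℝ, 0 < c ∧
      ∀ σ : Measure (EuclideanSpace ℝ (Fin n)), IsLocallyFiniteMeasure σ →
        ∀ u : EuclideanSpace ℝ (Fin n) → ℝ≥0∞, Measurable u →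
          σ.withDensity (fun y => u y ^ q) ≠ 0 →
          (∀ x, wolffPot n α p (σ.withDensity (fun y => u y ^ q)) x ≤ u x) →
          ∀ x, ENNReal.ofReal c * (wolffPot n α p σ x) ^ ((p - 1) / (p - 1 - q)) ≤ u x := by
  obtain ⟨N, hNdef⟩ : ∃ N : ℝ, N = (n : ℝ) - α * p := ⟨_, rfl⟩
  obtain ⟨b, hbdef⟩ : ∃ b : ℝ, b = 1 / (p - 1) := ⟨_, rfl⟩
  obtain ⟨Γ, hΓdef⟩ : ∃ Γ : ℝ, Γ = (p - 1) / (p - 1 - q) := ⟨_, rfl⟩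
  have hp1 : 0 < p - 1 := by linarith
  have hN : 0 < N := by
    rw [hNdef, sub_pos]
    exact (lt_div_iff₀ (by linarith)).1 hα
  have hb : 0 < b := by rw [hbdef]; positivity
  have hΓ0 : 0 < Γ := by rw [hΓdef]; exact div_pos hp1 (by linarith)
  have ha1 : q * b < 1 := by
    rw [hbdef, mul_one_div, div_lt_one hp1]; exact hq
  have hΓ : Γ = 1 / (1 - q * b) := by
    have h1 : p - 1 - q ≠ 0 := by linarith
    have h2 : 1 - q * b ≠ 0 := by linarith
    rw [hΓdef, div_eq_div_iff h1 h2, hbdef]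
    field_simp
  obtain ⟨δ, hδ⟩ : ∃ δ : ℝ≥0∞, δ = (ENNReal.ofReal (2 ^ N))⁻¹ ^ b := ⟨_, rfl⟩
  have hδ0 : 0 < δ := by
    rw [hδ]
    exact ENNReal.rpow_pos_of_nonneg (ENNReal.inv_pos.2 ENNReal.ofReal_ne_top) hb.le
  have hδt : δ ≠ ⊤ := by
    rw [hδ]
    refine ENNReal.rpow_ne_top_of_nonneg hb.le (ENNReal.inv_ne_top.2 ?_)
    simp only [ne_eq, ENNReal.ofReal_eq_zero, not_le]
    positivity
  have hc0 : 0 < ((δ / 2) ^ Γ) ^ Γ :=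
    ENNReal.rpow_pos_of_nonneg (ENNReal.rpow_pos_of_nonneg
      (ENNReal.div_pos hδ0.ne' (by norm_num)) hΓ0.le) hΓ0.le
  have hct : ((δ / 2) ^ Γ) ^ Γ ≠ ⊤ :=
    ENNReal.rpow_ne_top_of_nonneg hΓ0.le (ENNReal.rpow_ne_top_of_nonneg hΓ0.le
      (ENNReal.div_lt_top hδt (by norm_num)).ne)
  refine ⟨(((δ / 2) ^ Γ) ^ Γ).toReal, ENNReal.toReal_pos hc0.ne' hct, ?_⟩
  intro σ hσ u _ hν hu x
  have hW : ∀ μ y, wolffPot n α p μ y = ∫⁻ r in Ioi (0 : ℝ), wolffDensity N b μ y r := by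
    intro μ y
    rw [hNdef, hbdef]
    rfl
  simp only [hW] at hu ⊢
  rw [ENNReal.ofReal_toReal hct, ← hΓdef, ← ENNReal.mul_rpow_of_nonneg _ _ hΓ0.le,
    ← ENNReal.le_rpow_inv_iff hΓ0, setLIntegral_Ioi_zero_eq_iSup_Ioc, ENNReal.mul_iSup]
  -- It suffices to treat radii `r ≤ k`; for those, `σ` can be restricted to a large ball around `0`.
  refine iSup_le fun k => ?_
  rw [ENNReal.le_rpow_inv_iff hΓ0]
  have hR : 0 < ‖x‖ + k + 1 := by positivity
  obtain ⟨m, hm0, hm, hmν⟩ := exists_lower_bound _ hν hN hb hR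
  refine le_trans ?_ (restricted_bound hN hb hq0 ha1 hΓ
    (measurableSet_ball (x := (0 : EuclideanSpace ℝ (Fin n))) (ε := ‖x‖ + k + 1))
    measure_ball_lt_top.ne hδ hu hm0 hm (fun y hy => (hmν y hy).trans (hu y)) x ?_)
  · gcongr ((δ / 2) ^ Γ * ?_) ^ Γ
    refine (setLIntegral_mono' measurableSet_Ioc fun r hr => ?_).trans
      (lintegral_mono_set fun r hr => hr.1)
    have hsub : ball x r ⊆ ball 0 (‖x‖ + k + 1) := by
      refine ball_subset_ball' ?_
      rw [dist_zero_right]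
      linarith [hr.2]
    unfold wolffDensity
    rw [Measure.restrict_apply measurableSet_ball, inter_eq_left.2 hsub]
  · rw [mem_ball_zero_iff]
    have : (0 : ℝ) ≤ k := by positivity
    linarith
end

section
/- Let 0<q<1, let Ω ⊆ ℝⁿ be a nonempty open set, let σ ∈ M⁺(Ω), and let G be a kernel on Ω satisfying the weak maximum principle with constant h ≥ 1. If u : Ω → [0,∞] is measurable, u > 0 σ-almost everywhere, and u(x) ≥ G(u^q dσ)(x) for all x ∈ Ω, then u(x) ≥ (1−q)^{1/(1−q)} h^{−q/(1−q)} (Gσ(x))^{1/(1−q)} for all x ∈ Ω. -/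
/-!
Write `ν = u ^ q dσ`, so that `Gν ≤ u` on `Ω`. Fix `x ∈ Ω` and put `A = Gν(x)`; if `A = ∞` then
`u x = ∞`. Otherwise `0 < u < ∞` holds `σ`-almost everywhere on `Ω`, hence `dσ = u ^ (-q) dν`, and
`Gσ(x)` is the integral of `u ^ (-q)` against the finite measure `m = G(x, ·) dν` of mass `A`.

The restriction of `ν` to `{u ≤ t}` has potential at most `t` on its support, since `Gν ≤ u` and
`Gν` is lower semicontinuous. The weak maximum principle therefore gives `m {u ≤ t} ≤ h t`
(`setLIntegral_sublevel_le`), besides the trivial bound `m {u ≤ t} ≤ A`. Integrating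
`min (h t) A` over the levels yields `Gσ(x) ≤ h ^ q / (1 - q) * A ^ (1 - q)`
(`lintegral_rpow_neg_le`), and `A ≤ u x` turns this into the claimed lower bound.
-/


open MeasureTheory Metric Set ENNReal

/-! ### Potentials of lower semicontinuous kernels -/

open Filter Topology in
/-- Potentials of a lower semicontinuous kernel are lower semicontinuous, by Fatou's lemma along
the neighbourhood filter. -/
lemma lowerSemicontinuous_potential {X : Type*} [TopologicalSpace X] [FirstCountableTopology X]
    [MeasurableSpace X] [BorelSpace X] {H : X → X → ℝ≥0∞}
    (hH : LowerSemicontinuous (fun z : X × X => H z.1 z.2)) (μ : Measure X) :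
    LowerSemicontinuous (fun x => ∫⁻ y, H x y ∂μ) := by
  intro x
  refine lowerSemicontinuousAt_iff_le_liminf.2 ?_
  refine le_trans (lintegral_mono fun y => ?_) (lintegral_liminf_le fun i => ?_)
  · have h1 : LowerSemicontinuous (fun x => H x y) :=
      hH.comp (g := fun x => (x, y)) (by fun_prop)
    exact lowerSemicontinuousAt_iff_le_liminf.1 (h1 x)
  · have h1 : LowerSemicontinuous (fun y => H i y) :=
      hH.comp (g := fun y => (i, y)) (by fun_prop)
    exact h1.measurable

/-- The extension of `G` from `Ω × Ω` by zero. For `Ω` open and `G` a kernel on `Ω` it is lower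
semicontinuous on the whole space. -/
noncomputable def zeroExt {n : ℕ} (Ω : Set (EuclideanSpace ℝ (Fin n)))
    (G : EuclideanSpace ℝ (Fin n) → EuclideanSpace ℝ (Fin n) → ℝ≥0∞)
    (x y : EuclideanSpace ℝ (Fin n)) : ℝ≥0∞ :=
  (Ω ×ˢ Ω).indicator (fun z => G z.1 z.2) (x, y)

section Kernel

variable {n : ℕ} {Ω : Set (EuclideanSpace ℝ (Fin n))}
  {G : EuclideanSpace ℝ (Fin n) → EuclideanSpace ℝ (Fin n) → ℝ≥0∞}

lemma zeroExt_eq {x y : EuclideanSpace ℝ (Fin n)} (hx : x ∈ Ω) (hy : y ∈ Ω) :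
    zeroExt Ω G x y = G x y := by
  simp [zeroExt, hx, hy]

lemma lowerSemicontinuous_zeroExt (hΩo : IsOpen Ω) (hker : IsKernel Ω G) :
    LowerSemicontinuous (fun z : EuclideanSpace ℝ (Fin n) × EuclideanSpace ℝ (Fin n) =>
      zeroExt Ω G z.1 z.2) := by
  intro z c hc
  have hz : z ∈ Ω ×ˢ Ω := by
    by_contra hz
    simp [zeroExt, hz] at hc
  have hc' : c < G z.1 z.2 := by
    rw [← zeroExt_eq (G := G) hz.1 hz.2]
    exact hc
  have h1 := hker.1 z hz c hc'
  rw [(hΩo.prod hΩo).nhdsWithin_eq hz] at h1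
  filter_upwards [h1, (hΩo.prod hΩo).mem_nhds hz] with w hw hwΩ
  rwa [zeroExt_eq hwΩ.1 hwΩ.2]

lemma measurable_zeroExt (hΩo : IsOpen Ω) (hker : IsKernel Ω G)
    (x : EuclideanSpace ℝ (Fin n)) : Measurable (zeroExt Ω G x) :=
  ((lowerSemicontinuous_zeroExt hΩo hker).comp (g := fun y => (x, y)) (by fun_prop)).measurable

lemma kernelPot_eq_zeroExt (hΩo : IsOpen Ω) {x : EuclideanSpace ℝ (Fin n)} (hx : x ∈ Ω)
    (μ : Measure (EuclideanSpace ℝ (Fin n))) :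
    kernelPot Ω G μ x = ∫⁻ y in Ω, zeroExt Ω G x y ∂μ :=
  setLIntegral_congr_fun hΩo.measurableSet fun _ hy => (zeroExt_eq hx hy).symm

/-- A measure with one finite potential is finite on compact subsets of `Ω`, because a positive
lower semicontinuous function is bounded away from zero on a compact set. -/
lemma measure_lt_top_of_kernelPot_lt_top (hΩo : IsOpen Ω) (hker : IsKernel Ω G)
    {x : EuclideanSpace ℝ (Fin n)} (hx : x ∈ Ω) {μ : Measure (EuclideanSpace ℝ (Fin n))}
    (hfin : kernelPot Ω G μ x < ⊤) {K : Set (EuclideanSpace ℝ (Fin n))} (hKΩ : K ⊆ Ω)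
    (hK : IsCompact K) : μ K < ⊤ := by
  rcases K.eq_empty_or_nonempty with rfl | hne
  · simp
  have hlsc : LowerSemicontinuous (zeroExt Ω G x) :=
    (lowerSemicontinuous_zeroExt hΩo hker).comp (g := fun y => (x, y)) (by fun_prop)
  obtain ⟨y₀, hy₀, hmin⟩ := (hlsc.lowerSemicontinuousOn K).exists_isMinOn hne hK
  have hc : 0 < zeroExt Ω G x y₀ := by
    rw [zeroExt_eq hx (hKΩ hy₀)]
    exact hker.2 x hx y₀ (hKΩ hy₀)
  have hle : zeroExt Ω G x y₀ * μ K ≤ kernelPot Ω G μ x := by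
    rw [kernelPot_eq_zeroExt hΩo hx, ← setLIntegral_const]
    exact (setLIntegral_mono' hK.measurableSet fun y hy => isMinOn_iff.1 hmin y hy).trans
      (lintegral_mono_set hKΩ)
  by_contra htop
  rw [not_lt, top_le_iff] at htop
  rw [htop, ENNReal.mul_top hc.ne'] at hle
  exact (hle.trans_lt hfin).ne rfl

/-! ### Sublevel sets of a supersolution -/

/-- The weak maximum principle applied to `ν` restricted to a sublevel set of a supersolution:
lower semicontinuity of the potential carries the bound `Gν ≤ t` from the sublevel set to the
support of the restricted measure. -/
lemma setLIntegral_sublevel_le (hΩo : IsOpen Ω) (hker : IsKernel Ω G) {h : ℝ}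
    (hwmp : SatisfiesWMP Ω G h) {ν : Measure (EuclideanSpace ℝ (Fin n))}
    (hν : ∀ K ⊆ Ω, IsCompact K → ν K < ⊤) {u : EuclideanSpace ℝ (Fin n) → ℝ≥0∞}
    (hu : Measurable u) (hsuper : ∀ x ∈ Ω, kernelPot Ω G ν x ≤ u x) {t : ℝ} (ht : 0 < t)
    {x : EuclideanSpace ℝ (Fin n)} (hx : x ∈ Ω) :
    ∫⁻ y in Ω ∩ {y | u y ≤ ENNReal.ofReal t}, zeroExt Ω G x y ∂ν ≤ ENNReal.ofReal (h * t) := by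
  set F := Ω ∩ {y | u y ≤ ENNReal.ofReal t} with hF
  have hFm : MeasurableSet F :=
    hΩo.measurableSet.inter (measurableSet_le hu measurable_const)
  have ht0 : ENNReal.ofReal t ≠ 0 := by simpa using ht
  have htt : ENNReal.ofReal t ≠ ⊤ := ENNReal.ofReal_ne_top
  set μ := (ENNReal.ofReal t)⁻¹ • ν.restrict F with hμ
  have hpot : ∀ z ∈ Ω, kernelPot Ω G μ z =
      (ENNReal.ofReal t)⁻¹ * ∫⁻ y in F, zeroExt Ω G z y ∂ν := by
    intro z hz
    rw [kernelPot_eq_zeroExt hΩo hz, hμ, Measure.restrict_smul, lintegral_smul_measure,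
      Measure.restrict_restrict hΩo.measurableSet, smul_eq_mul,
      Set.inter_eq_right.2 (Set.inter_subset_left : F ⊆ Ω)]
  have hmem : MemMplus Ω μ := by
    constructor
    · have : Ωᶜ ∩ F = ∅ := by
        ext y
        simp only [hF, mem_inter_iff, mem_compl_iff, mem_empty_iff_false, iff_false]
        tauto
      simp [hμ, Measure.restrict_apply hΩo.measurableSet.compl, this]
    · intro K hKΩ hK
      rw [hμ, Measure.smul_apply, smul_eq_mul]
      exact ENNReal.mul_lt_top (ENNReal.inv_lt_top.2 (pos_iff_ne_zero.2 ht0))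
        ((Measure.restrict_apply_le _ _).trans_lt (hν K hKΩ hK))
  have hsupp : ∀ z ∈ Ω ∩ msupport μ, kernelPot Ω G μ z ≤ 1 := by
    rintro z ⟨hz, hzs⟩
    have hle : kernelPot Ω G ν z ≤ ENNReal.ofReal t := by
      by_contra hlt
      rw [not_le, kernelPot_eq_zeroExt hΩo hz] at hlt
      have hlsc := lowerSemicontinuous_potential (lowerSemicontinuous_zeroExt hΩo hker)
        (ν.restrict Ω)
      have hUo : IsOpen {w | ENNReal.ofReal t < ∫⁻ y in Ω, zeroExt Ω G w y ∂ν} :=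
        hlsc.isOpen_preimage _
      have hpos := hzs _ hUo hlt
      have hempty : {w | ENNReal.ofReal t < ∫⁻ y in Ω, zeroExt Ω G w y ∂ν} ∩ F = ∅ := by
        rw [Set.eq_empty_iff_forall_notMem]
        rintro w ⟨hw, hwΩ, hwu⟩
        have := hsuper w hwΩ
        rw [kernelPot_eq_zeroExt hΩo hwΩ] at this
        exact absurd (this.trans hwu) (not_le.2 hw)
      rw [hμ, Measure.smul_apply, Measure.restrict_apply hUo.measurableSet, hempty] at hpos
      simp at hpos
    rw [hpot z hz, ← ENNReal.inv_mul_cancel ht0 htt]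
    gcongr
    refine le_trans ?_ hle
    rw [kernelPot_eq_zeroExt hΩo hz]
    exact lintegral_mono_set Set.inter_subset_left
  have h1 := hwmp μ hmem hsupp x hx
  rw [hpot x hx, mul_comm, ← div_eq_mul_inv] at h1
  rw [ENNReal.ofReal_mul' ht.le]
  exact (ENNReal.div_le_iff ht0 htt).1 h1

end Kernel

/-! ### Integration over the levels -/

/-- The layer cake estimate. Sublevel sets of `u` have mass at most `min (h t) a`; in the variable
`s = t ^ (-q)` this bounds the integral of `u ^ (-q)` by
`∫₀^∞ min a (h * s ^ (-1 / q)) ds = h ^ q / (1 - q) * a ^ (1 - q)`. -/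
lemma lintegral_rpow_neg_le {X : Type*} [MeasurableSpace X] (m : Measure X) {u : X → ℝ≥0∞}
    (hu : Measurable u) {q h a : ℝ} (hq0 : 0 < q) (hq : q < 1) (hh : 0 < h) (ha : 0 < a)
    (hm : m univ ≤ ENNReal.ofReal a)
    (hlev : ∀ t : ℝ, 0 < t → m {y | u y ≤ ENNReal.ofReal t} ≤ ENNReal.ofReal (h * t)) :
    ∫⁻ y, ENNReal.ofReal ((u y).toReal ^ (-q)) ∂m
      ≤ ENNReal.ofReal (h ^ q / (1 - q) * a ^ (1 - q)) := by
  have hq1 : 0 < 1 - q := by linarith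
  have hmeas : Measurable fun y => (u y).toReal ^ (-q) := hu.ennreal_toReal.pow_const _
  rw [lintegral_eq_lintegral_meas_le m
    (Filter.Eventually.of_forall fun y => Real.rpow_nonneg ENNReal.toReal_nonneg _)
    hmeas.aemeasurable]
  -- the two bounds `a` and `h * s ^ (-1 / q)` cross at `s₀`
  set s₀ : ℝ := (h / a) ^ q with hs₀
  have hs₀pos : 0 < s₀ := Real.rpow_pos_of_pos (div_pos hh ha) _
  have hlow : ∫⁻ s in Ioc 0 s₀, m {y | s ≤ (u y).toReal ^ (-q)}
      ≤ ENNReal.ofReal (a * s₀) := by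
    calc _ ≤ ∫⁻ s in Ioc 0 s₀, ENNReal.ofReal a :=
          lintegral_mono fun s => (measure_mono (subset_univ _)).trans hm
      _ = _ := by
          rw [setLIntegral_const, Real.volume_Ioc, sub_zero, ENNReal.ofReal_mul ha.le]
  have hexp : -(1 / q) < -1 := by
    rw [neg_lt_neg_iff, lt_div_iff₀ hq0]; linarith
  have hhigh : ∫⁻ s in Ioi s₀, m {y | s ≤ (u y).toReal ^ (-q)}
      ≤ ENNReal.ofReal (h * (-s₀ ^ (-(1 / q) + 1) / (-(1 / q) + 1))) := by
    have hint := (integrableOn_Ioi_rpow_of_lt hexp hs₀pos).const_mul h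
    rw [← integral_Ioi_rpow_of_lt hexp hs₀pos, ← integral_const_mul,
      ofReal_integral_eq_lintegral_ofReal hint]
    · refine setLIntegral_mono' measurableSet_Ioi fun s hs => ?_
      have hspos : 0 < s := hs₀pos.trans hs
      refine (measure_mono ?_).trans (hlev (s ^ (-(1 / q))) (Real.rpow_pos_of_pos hspos _))
      intro y hy
      simp only [mem_ofPred_eq] at hy ⊢
      -- `0 ^ (-q) = 0` for the real power, so `u y` is neither `0` nor `∞`
      have hne : (u y).toReal ≠ 0 := by
        intro h0
        rw [h0, Real.zero_rpow (by linarith)] at hy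
        linarith
      have hupos : 0 < (u y).toReal := lt_of_le_of_ne ENNReal.toReal_nonneg hne.symm
      have htop : u y ≠ ⊤ := fun h0 => hne (by simp [h0])
      rw [ENNReal.le_ofReal_iff_toReal_le htop (Real.rpow_nonneg hspos.le _)]
      calc (u y).toReal = ((u y).toReal ^ (-q)) ^ (-(1 / q)) := by
            rw [← Real.rpow_mul hupos.le, neg_mul_neg, mul_one_div_cancel hq0.ne',
              Real.rpow_one]
        _ ≤ s ^ (-(1 / q)) :=
            Real.rpow_le_rpow_of_nonpos hspos hy (by linarith)
    · filter_upwards [ae_restrict_mem measurableSet_Ioi] with s hs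
      exact mul_nonneg hh.le (Real.rpow_nonneg (hs₀pos.trans hs).le _)
  have hneg : -(1 / q) + 1 < 0 := by linarith
  have hsum : a * s₀ + h * (-s₀ ^ (-(1 / q) + 1) / (-(1 / q) + 1))
      = h ^ q / (1 - q) * a ^ (1 - q) := by
    have e1 : s₀ ^ (-(1 / q) + 1) = s₀ * (a / h) := by
      rw [Real.rpow_add hs₀pos, Real.rpow_one, mul_comm, hs₀,
        ← Real.rpow_mul (div_pos hh ha).le, mul_neg, mul_one_div_cancel hq0.ne',
        Real.rpow_neg_one, inv_div]
    have e2 : s₀ * a = h ^ q * a ^ (1 - q) := by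
      rw [hs₀, Real.div_rpow hh.le ha.le, Real.rpow_sub ha, Real.rpow_one]
      ring
    have e3 : h * (-(s₀ * (a / h)) / (-(1 / q) + 1)) = s₀ * a * (q / (1 - q)) := by
      have : -(1 / q) + 1 = -((1 - q) / q) := by field_simp; ring
      rw [this]
      field_simp
    rw [e1, e3, mul_comm a s₀, e2]
    field_simp
    ring
  rw [← Ioc_union_Ioi_eq_Ioi hs₀pos.le,
    lintegral_union measurableSet_Ioi Set.Ioc_disjoint_Ioi_same, ← hsum,
    ENNReal.ofReal_add (mul_nonneg ha.le hs₀pos.le)]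
  · exact add_le_add hlow hhigh
  · refine mul_nonneg hh.le (div_nonneg_of_nonpos ?_ hneg.le)
    exact neg_nonpos.2 (Real.rpow_nonneg hs₀pos.le _)

/-! ### The pointwise lower bound -/

theorem stmt16 {n : ℕ} (q h : ℝ) (hq0 : 0 < q) (hq : q < 1)
    (Ω : Set (EuclideanSpace ℝ (Fin n))) (hΩo : IsOpen Ω) (hΩne : Ω.Nonempty)
    (σ : Measure (EuclideanSpace ℝ (Fin n))) (hσ : MemMplus Ω σ)
    (G : EuclideanSpace ℝ (Fin n) → EuclideanSpace ℝ (Fin n) → ℝ≥0∞)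
    (hker : IsKernel Ω G) (hh : 1 ≤ h) (hwmp : SatisfiesWMP Ω G h)
    (u : EuclideanSpace ℝ (Fin n) → ℝ≥0∞) (hu : Measurable u)
    (hpos : ∀ᵐ x ∂σ, 0 < u x)
    (hsuper : ∀ x ∈ Ω, kernelPot Ω G (σ.withDensity (fun y => u y ^ q)) x ≤ u x) :
    ∀ x ∈ Ω,
      ENNReal.ofReal ((1 - q) ^ ((1 : ℝ) / (1 - q)) * h ^ (-(q / (1 - q)))) *
        (kernelPot Ω G σ x) ^ ((1 : ℝ) / (1 - q)) ≤ u x := by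
  intro x hx
  have hq1 : 0 < 1 - q := by linarith
  have hh0 : 0 < h := by linarith
  have hΩm := hΩo.measurableSet
  set ν := σ.withDensity (fun y => u y ^ q) with hν
  have hpowm : Measurable fun y => u y ^ q := hu.pow_const q
  have hHm := measurable_zeroExt hΩo hker x
  rcases eq_or_ne (kernelPot Ω G ν x) ⊤ with htop | htop
  · have := hsuper x hx
    rw [htop, top_le_iff] at this
    simp [this]
  refine le_trans ?_ (hsuper x hx)
  have hνK : ∀ K ⊆ Ω, IsCompact K → ν K < ⊤ := fun K hKΩ hK =>
    measure_lt_top_of_kernelPot_lt_top hΩo hker hx (lt_top_iff_ne_top.2 htop) hKΩ hK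
  -- the finite measure `G(x, ·) dν`, of total mass `Gν(x)`
  set m := (ν.restrict Ω).withDensity (zeroExt Ω G x) with hm
  have hmuniv : m univ = kernelPot Ω G ν x := by
    rw [hm, withDensity_apply _ MeasurableSet.univ, Measure.restrict_univ,
      kernelPot_eq_zeroExt hΩo hx]
  have hνΩ : ν.restrict Ω = (σ.restrict Ω).withDensity (fun y => u y ^ q) :=
    restrict_withDensity hΩm _
  have hpotν : kernelPot Ω G ν x = ∫⁻ y in Ω, u y ^ q * zeroExt Ω G x y ∂σ := by
    rw [kernelPot_eq_zeroExt hΩo hx, hνΩ, lintegral_withDensity_eq_lintegral_mul _ hpowm hHm]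
    rfl
  have hHpos : ∀ᵐ y ∂σ.restrict Ω, 0 < zeroExt Ω G x y := by
    filter_upwards [ae_restrict_mem hΩm] with y hy
    rw [zeroExt_eq hx hy]
    exact hker.2 x hx y hy
  have hupos : ∀ᵐ y ∂σ.restrict Ω, 0 < u y := ae_restrict_of_ae hpos
  have hufin : ∀ᵐ y ∂σ.restrict Ω, u y ≠ ⊤ := by
    have h1 := ae_lt_top (hpowm.mul hHm) (hpotν ▸ htop)
    filter_upwards [h1, hHpos] with y hy hHy hytop
    simp [hytop, hq0, ENNReal.top_mul hHy.ne'] at hy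
  -- `dσ = u ^ (-q) dν` on `Ω`
  have hpotσ : kernelPot Ω G σ x = ∫⁻ y, ENNReal.ofReal ((u y).toReal ^ (-q)) ∂m := by
    have hwm : Measurable fun y => ENNReal.ofReal ((u y).toReal ^ (-q)) :=
      (hu.ennreal_toReal.pow_const _).ennreal_ofReal
    rw [hm, lintegral_withDensity_eq_lintegral_mul _ hHm hwm, hνΩ,
      lintegral_withDensity_eq_lintegral_mul _ hpowm (hHm.mul hwm),
      kernelPot_eq_zeroExt hΩo hx]
    refine lintegral_congr_ae ?_
    filter_upwards [hupos, hufin] with y h0 h1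
    have hr : 0 < (u y).toReal := ENNReal.toReal_pos h0.ne' h1
    have e : u y ^ q * ENNReal.ofReal ((u y).toReal ^ (-q)) = 1 := by
      rw [← ENNReal.ofReal_rpow_of_pos hr, ENNReal.ofReal_toReal h1,
        ← ENNReal.rpow_add _ _ h0.ne' h1, add_neg_cancel, ENNReal.rpow_zero]
    simp only [Pi.mul_apply]
    rw [mul_left_comm, e, mul_one]
  have hlev : ∀ t : ℝ, 0 < t → m {y | u y ≤ ENNReal.ofReal t} ≤ ENNReal.ofReal (h * t) := by
    intro t ht
    have hsm : MeasurableSet {y | u y ≤ ENNReal.ofReal t} := measurableSet_le hu measurable_const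
    rw [hm, withDensity_apply _ hsm, Measure.restrict_restrict hsm, inter_comm]
    exact setLIntegral_sublevel_le hΩo hker hwmp hνK hu hsuper ht hx
  rcases eq_or_ne (kernelPot Ω G ν x) 0 with hzero | hne
  · have hm0 : m = 0 := Measure.measure_univ_eq_zero.1 (hmuniv.trans hzero)
    rw [hpotσ, hm0, lintegral_zero_measure, ENNReal.zero_rpow_of_pos (by positivity), mul_zero]
    exact zero_le
  set a := (kernelPot Ω G ν x).toReal with ha
  have hapos : 0 < a := ENNReal.toReal_pos hne htop
  have hA : kernelPot Ω G ν x = ENNReal.ofReal a := (ENNReal.ofReal_toReal htop).symm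
  have hbound : kernelPot Ω G σ x ≤ ENNReal.ofReal (h ^ q / (1 - q) * a ^ (1 - q)) :=
    hpotσ.le.trans
      (lintegral_rpow_neg_le m hu hq0 hq hh0 hapos (hmuniv.trans hA).le hlev)
  have hval : (1 - q) ^ ((1 : ℝ) / (1 - q)) * h ^ (-(q / (1 - q))) *
      (h ^ q / (1 - q) * a ^ (1 - q)) ^ ((1 : ℝ) / (1 - q)) = a := by
    have hhq : 0 < h ^ q := Real.rpow_pos_of_pos hh0 _
    rw [Real.mul_rpow (by positivity) (by positivity), Real.div_rpow hhq.le hq1.le,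
      ← Real.rpow_mul hapos.le, ← Real.rpow_mul hh0.le, mul_one_div_cancel hq1.ne',
      Real.rpow_one, mul_one_div, Real.rpow_neg hh0.le]
    have p1 : (1 - q) ^ ((1 : ℝ) / (1 - q)) ≠ 0 := (Real.rpow_pos_of_pos hq1 _).ne'
    have p2 : h ^ (q / (1 - q)) ≠ 0 := (Real.rpow_pos_of_pos hh0 _).ne'
    generalize (1 - q) ^ ((1 : ℝ) / (1 - q)) = c at *
    generalize h ^ (q / (1 - q)) = d at *
    field_simp
  rw [hA]
  calc _ ≤ ENNReal.ofReal ((1 - q) ^ ((1 : ℝ) / (1 - q)) * h ^ (-(q / (1 - q)))) *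
        ENNReal.ofReal (h ^ q / (1 - q) * a ^ (1 - q)) ^ ((1 : ℝ) / (1 - q)) := by gcongr
    _ = ENNReal.ofReal a := by
        rw [ENNReal.ofReal_rpow_of_nonneg (by positivity) (by positivity),
          ← ENNReal.ofReal_mul (by positivity), hval]
end
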